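/- (Uniform convergence of objectives, M3FC.) Let 𝒳, 𝒰, 𝒳⁰, 𝒰⁰ be compact metric spaces, with p, p⁰, r Lipschitz, γ ∈ (0,1), and equi-Lipschitz policy classes Π, Π⁰. Then the N-agent objective converges to the limiting M3FC objective uniformly over policies: sup_{(π,π⁰) ∈ Π × Π⁰} | J^N(π, π⁰) − J(Φ^{-1}(π), π⁰) | → 0 as N → ∞. -/

import Mathlib

open MeasureTheory

noncomputable instance {X : Type*} [MeasurableSpace X] : MeasurableSpace (ProbabilityMeasure X) :=
  inferInstanceAs (MeasurableSpace {μ : Measure X // IsProbabilityMeasure μ})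

/-- `W₁` distance on probability measures, via Kantorovich duality. -/
noncomputable def W1 {X : Type*} [MeasurableSpace X] [PseudoMetricSpace X]
    (μ ν : ProbabilityMeasure X) : ℝ :=
  ⨆ f : {f : X → ℝ // LipschitzWith 1 f},
    |∫ x, (f : X → ℝ) x ∂(μ : Measure X) - ∫ x, (f : X → ℝ) x ∂(ν : Measure X)|

/-- Empirical measure of `N` points (an arbitrary probability measure if `N = 0`). -/
noncomputable def emp {X : Type*} [MeasurableSpace X] [Nonempty X] (N : ℕ) (x : Fin N → X) :
    ProbabilityMeasure X := by
  classical
  exact if hN : N = 0 then ⟨Measure.dirac (Classical.arbitrary X), inferInstance⟩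
  else ⟨(N : ENNReal)⁻¹ • ∑ i : Fin N, Measure.dirac (x i), by
    constructor
    simp only [Measure.smul_apply, Measure.coe_finset_sum, Finset.sum_apply,
      Measure.dirac_apply' _ MeasurableSet.univ, smul_eq_mul]
    simp only [Set.indicator_univ, Pi.one_apply, Finset.sum_const, Finset.card_univ,
      Fintype.card_fin, nsmul_eq_mul, mul_one]
    exact ENNReal.inv_mul_cancel (by exact_mod_cast hN) (by simp)⟩

/-- Law of `(x⁰_t, u⁰_t, (x^{i,N}_t)_i)` in the `N`-agent M3FC system: minor agents start
i.i.d. `μ0`, the major agent starts at `x00`; minor actions are sampled from the shared policy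
`π`, the major action from `π0`, and states transition through `p` and `p⁰`, all driven by the
empirical mean field. -/
noncomputable def m3LawN {X U X0 U0 : Type*} [MeasurableSpace X] [Nonempty X]
    [MeasurableSpace U] [MeasurableSpace X0] [MeasurableSpace U0]
    (p : X → U → X0 → U0 → ProbabilityMeasure X → ProbabilityMeasure X)
    (p0 : X0 → U0 → ProbabilityMeasure X → ProbabilityMeasure X0)
    (π : ℕ → X → X0 → ProbabilityMeasure X → ProbabilityMeasure U)
    (π0 : ℕ → X0 → ProbabilityMeasure X → ProbabilityMeasure U0)
    (μ0 : ProbabilityMeasure X) (x00 : X0) (N : ℕ) :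
    ℕ → Measure (X0 × U0 × (Fin N → X))
  | 0 => (Measure.pi fun _ : Fin N => (μ0 : Measure X)).bind fun x =>
      ((π0 0 x00 (emp N x) : Measure U0)).map fun u0 => (x00, u0, x)
  | t + 1 => (m3LawN p p0 π π0 μ0 x00 N t).bind fun s =>
      (((p0 s.1 s.2.1 (emp N s.2.2) : Measure X0)).prod
        (Measure.pi fun i => ((π t (s.2.2 i) s.1 (emp N s.2.2) : Measure U)).bind
          fun u => (p (s.2.2 i) u s.1 s.2.1 (emp N s.2.2) : Measure X))).bind
        fun y => ((π0 (t + 1) y.1 (emp N y.2) : Measure U0)).map fun u0 => (y.1, u0, y.2)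

/-- Law of `(x⁰_t, u⁰_t, μ_t)` in the limiting M3FC process, where `Tq t x⁰ u⁰ μ` is the
(closed-loop) deterministic mean field transition. -/
noncomputable def m3LimLaw {X U0 X0 : Type*} [MeasurableSpace X]
    [MeasurableSpace X0] [MeasurableSpace U0]
    (p0 : X0 → U0 → ProbabilityMeasure X → ProbabilityMeasure X0)
    (π0 : ℕ → X0 → ProbabilityMeasure X → ProbabilityMeasure U0)
    (Tq : ℕ → X0 → U0 → ProbabilityMeasure X → ProbabilityMeasure X)
    (μ0 : ProbabilityMeasure X) (x00 : X0) :
    ℕ → Measure (X0 × U0 × ProbabilityMeasure X)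
  | 0 => ((π0 0 x00 μ0 : Measure U0)).map fun u0 => (x00, u0, μ0)
  | t + 1 => (m3LimLaw p0 π0 Tq μ0 x00 t).bind fun s =>
      ((p0 s.1 s.2.1 s.2.2 : Measure X0)).bind fun y0 =>
        ((π0 (t + 1) y0 (Tq t s.1 s.2.1 s.2.2) : Measure U0)).map
          fun u0 => (y0, u0, Tq t s.1 s.2.1 s.2.2)

/-!
On a compact space `W₁` metrizes weak convergence, and by Arzelà–Ascoli it is controlled, up to any
`δ > 0`, by finitely many 1-Lipschitz test functions. The variance bound for the sample mean of each
test function therefore gives a law of large numbers in `W₁` for empirical measures which is uniform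
over all samples of independent, not necessarily identically distributed, points. Given the current
state, the next minor states in the `N`-agent system form such a sample, with average law the
limiting mean field transition. Hence the map replacing minor states by their empirical measure
intertwines the `N`-agent chain with the limiting chain up to an error that vanishes uniformly in
state and policies. The limiting transitions are Lipschitz for `W₁`, with a constant depending only
on the Lipschitz constants of the data, so by time `t` these errors accumulate at most to a
geometric sum. The expected reward at each time therefore converges uniformly, and dominated
convergence along the summable discount weights passes this to the objectives.
-/

open Filter Topology
open scoped NNReal ENNReal

section KantorovichDistance

lemma abs_integral_sub_integral_le {α : Type*} [MeasurableSpace α] {m : Measure α}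
    [IsProbabilityMeasure m] {f g : α → ℝ} (hf : Integrable f m) (hg : Integrable g m) {c : ℝ}
    (h : ∀ a, |f a - g a| ≤ c) : |∫ a, f a ∂m - ∫ a, g a ∂m| ≤ c := by
  rw [← integral_sub hf hg]
  simpa using norm_integral_le_of_norm_le_const (μ := m) (f := fun a => f a - g a) (.of_forall h)

lemma W1_le {X : Type*} [MeasurableSpace X] [PseudoMetricSpace X] {μ ν : ProbabilityMeasure X}
    {c : ℝ} (h : ∀ f : X → ℝ, LipschitzWith 1 f →
      |∫ x, f x ∂(μ : Measure X) - ∫ x, f x ∂(ν : Measure X)| ≤ c) : W1 μ ν ≤ c :=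
  haveI : Nonempty {f : X → ℝ // LipschitzWith 1 f} := ⟨0, .const' 0⟩
  ciSup_le fun f => h f f.2

lemma W1_comm {X : Type*} [MeasurableSpace X] [PseudoMetricSpace X] (μ ν : ProbabilityMeasure X) :
    W1 μ ν = W1 ν μ := by
  simp only [W1, abs_sub_comm]

variable {X : Type*} [PseudoMetricSpace X] [CompactSpace X]

lemma dist_le_diam_univ (x y : X) : dist x y ≤ Metric.diam (Set.univ : Set X) :=
  Metric.dist_le_diam_of_mem isCompact_univ.isBounded trivial trivial

/-- Arzelà–Ascoli for the 1-Lipschitz functions vanishing at a base point; the constant `c` undoes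
that normalization. -/
lemma exists_finset_lipschitz_net [Nonempty X] {δ : ℝ} (hδ : 0 < δ) :
    ∃ s : Finset (X → ℝ), (∀ g ∈ s, LipschitzWith 1 g) ∧
      ∀ f : X → ℝ, LipschitzWith 1 f → ∃ g ∈ s, ∃ c : ℝ, ∀ x, |f x - (g x + c)| ≤ δ := by
  classical
  obtain ⟨z⟩ := ‹Nonempty X›
  let A : Set (BoundedContinuousFunction X ℝ) := {f | LipschitzWith 1 f ∧ f z = 0}
  have compact_closure : IsCompact (closure A) := by
    refine BoundedContinuousFunction.arzela_ascoli _ (isCompact_closedBall (0 : ℝ)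
      (Metric.diam (Set.univ : Set X))) A (fun f x ⟨hf, hz⟩ => ?_)
      (LipschitzWith.uniformEquicontinuous _ 1 fun f => f.2.1).equicontinuous
    simpa [hz] using (hf.dist_le_mul x z).trans (by simpa using dist_le_diam_univ x z)
  obtain ⟨t, htA, htf, ht⟩ := Metric.finite_approx_of_totallyBounded
    (compact_closure.totallyBounded.subset subset_closure) δ hδ
  refine ⟨htf.toFinset.image (⇑), by simpa using fun f hf => (htA hf).1, fun f hf => ?_⟩
  let F : BoundedContinuousFunction X ℝ :=
    .mkOfCompact ⟨fun x => f x - f z, (hf.continuous.sub continuous_const)⟩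
  have hF : F ∈ A := ⟨.of_dist_le_mul fun x y => by simpa [F] using hf.dist_le_mul x y, by simp [F]⟩
  obtain ⟨g, hg, hFg⟩ := Set.mem_iUnion₂.1 (ht hF)
  refine ⟨g, Finset.mem_image_of_mem _ (htf.mem_toFinset.2 hg), f z, fun x => ?_⟩
  calc |f x - (g x + f z)| = dist (F x) (g x) := by rw [Real.dist_eq]; congr 1; simp [F]; ring
    _ ≤ δ := (BoundedContinuousFunction.dist_coe_le_dist x).trans (Metric.mem_ball.1 hFg).le

variable [MeasurableSpace X] [OpensMeasurableSpace X]

lemma integrable_of_lipschitzWith {K : ℝ≥0} {f : X → ℝ} (hf : LipschitzWith K f)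
    (μ : Measure X) [IsFiniteMeasure μ] : Integrable f μ :=
  hf.continuous.integrable_of_hasCompactSupport (.of_compactSpace f)

lemma abs_sub_integral_le_diam {f : X → ℝ} (hf : LipschitzWith 1 f) (μ : ProbabilityMeasure X)
    (z : X) : |f z - ∫ x, f x ∂(μ : Measure X)| ≤ Metric.diam (Set.univ : Set X) := by
  simpa using abs_integral_sub_integral_le (integrable_const (f z))
    (integrable_of_lipschitzWith hf (μ : Measure X)) fun x =>
      (hf.dist_le_mul z x).trans (by simpa using dist_le_diam_univ z x)

lemma abs_integral_sub_integral_le_two_mul_diam {f : X → ℝ} (hf : LipschitzWith 1 f)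
    (μ ν : ProbabilityMeasure X) :
    |∫ x, f x ∂(μ : Measure X) - ∫ x, f x ∂(ν : Measure X)|
      ≤ 2 * Metric.diam (Set.univ : Set X) := by
  obtain ⟨z⟩ := μ.nonempty
  have hμ := abs_sub_integral_le_diam hf μ z
  have hν := abs_sub_integral_le_diam hf ν z
  rw [abs_le] at *
  constructor <;> linarith

lemma abs_integral_sub_integral_le_W1 {f : X → ℝ} (hf : LipschitzWith 1 f)
    (μ ν : ProbabilityMeasure X) :
    |∫ x, f x ∂(μ : Measure X) - ∫ x, f x ∂(ν : Measure X)| ≤ W1 μ ν :=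
  le_ciSup (f := fun f : {f : X → ℝ // LipschitzWith 1 f} =>
      |∫ x, f.1 x ∂(μ : Measure X) - ∫ x, f.1 x ∂(ν : Measure X)|)
    ⟨_, Set.forall_mem_range.2 fun f => abs_integral_sub_integral_le_two_mul_diam f.2 μ ν⟩ ⟨f, hf⟩

lemma abs_integral_sub_integral_le_mul_W1 {K : ℝ≥0} {f : X → ℝ} (hf : LipschitzWith K f)
    (μ ν : ProbabilityMeasure X) :
    |∫ x, f x ∂(μ : Measure X) - ∫ x, f x ∂(ν : Measure X)| ≤ K * W1 μ ν := by
  obtain rfl | hK := eq_or_ne K 0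
  · obtain ⟨z⟩ := μ.nonempty
    have hconst : f = fun _ => f z := funext fun x =>
      dist_le_zero.1 (by simpa using hf.dist_le_mul x z)
    rw [hconst]
    simp
  · have hf' : LipschitzWith 1 fun x => (K : ℝ)⁻¹ * f x := by
      refine (LipschitzWith.weaken ((lipschitzWith_smul (K : ℝ)⁻¹).comp hf) ?_)
      simp [hK]
    have h := abs_integral_sub_integral_le_W1 hf' μ ν
    rw [integral_const_mul, integral_const_mul, ← mul_sub, abs_mul, abs_of_nonneg (by positivity),
      inv_mul_le_iff₀ (by positivity)] at h
    exact h

lemma W1_self (μ : ProbabilityMeasure X) : W1 μ μ = 0 :=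
  le_antisymm (W1_le fun f _ => by simp)
    ((abs_nonneg _).trans (abs_integral_sub_integral_le_W1 (.const' 0) μ μ))

lemma W1_triangle (μ ν ρ : ProbabilityMeasure X) : W1 μ ρ ≤ W1 μ ν + W1 ν ρ :=
  W1_le fun f hf => (abs_sub_le _ (∫ x, f x ∂(ν : Measure X)) _).trans
    (add_le_add (abs_integral_sub_integral_le_W1 hf μ ν) (abs_integral_sub_integral_le_W1 hf ν ρ))

lemma exists_finset_W1_le [Nonempty X] {δ : ℝ} (hδ : 0 < δ) :
    ∃ s : Finset (X → ℝ), (∀ f ∈ s, LipschitzWith 1 f) ∧ ∀ μ ν : ProbabilityMeasure X,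
      W1 μ ν ≤ δ + ∑ f ∈ s, |∫ x, f x ∂(μ : Measure X) - ∫ x, f x ∂(ν : Measure X)| := by
  obtain ⟨s, hs, hnet⟩ := exists_finset_lipschitz_net (X := X) (half_pos hδ)
  refine ⟨s, hs, fun μ ν => W1_le fun f hf => ?_⟩
  obtain ⟨g, hg, c, hfg⟩ := hnet f hf
  have approx (ρ : ProbabilityMeasure X) :
      |∫ x, f x ∂(ρ : Measure X) - (∫ x, g x ∂(ρ : Measure X) + c)| ≤ δ / 2 := by
    have hgi := integrable_of_lipschitzWith (hs g hg) (ρ : Measure X)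
    simpa [integral_add hgi (integrable_const c)] using abs_integral_sub_integral_le
      (integrable_of_lipschitzWith hf (ρ : Measure X)) (hgi.add (integrable_const c)) hfg
  have single := Finset.single_le_sum (f := fun f : X → ℝ =>
    |∫ x, f x ∂(μ : Measure X) - ∫ x, f x ∂(ν : Measure X)|) (fun _ _ => abs_nonneg _) hg
  have hμ := abs_le.1 (approx μ)
  have hν := abs_le.1 (approx ν)
  have hμν := abs_le.1 single
  rw [abs_le]
  constructor <;> linarith

lemma tendsto_W1_nhds (μ : ProbabilityMeasure X) : Tendsto (W1 · μ) (𝓝 μ) (𝓝 0) := by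
  have := μ.nonempty
  refine tendsto_order.2 ⟨fun a ha => .of_forall fun ν => ha.trans_le ?_, fun ε hε => ?_⟩
  · exact (abs_nonneg _).trans (abs_integral_sub_integral_le_W1 (.const' 0) ν μ)
  obtain ⟨s, hs, hnet⟩ := exists_finset_W1_le (X := X) (half_pos hε)
  have hint (f) (hf : f ∈ s) : Tendsto (fun ν : ProbabilityMeasure X => ∫ x, f x ∂(ν : Measure X))
      (𝓝 μ) (𝓝 (∫ x, f x ∂(μ : Measure X))) :=
    ProbabilityMeasure.tendsto_iff_forall_integral_tendsto.1 tendsto_id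
      (.mkOfCompact ⟨f, (hs f hf).continuous⟩)
  have hsum : Tendsto (fun ν : ProbabilityMeasure X =>
      ∑ f ∈ s, |∫ x, f x ∂(ν : Measure X) - ∫ x, f x ∂(μ : Measure X)|) (𝓝 μ) (𝓝 0) := by
    simpa using tendsto_finsetSum s fun f hf =>
      ((hint f hf).sub_const (∫ x, f x ∂(μ : Measure X))).abs
  filter_upwards [hsum.eventually_lt_const (half_pos hε)] with ν hν
  linarith [hnet ν μ]

lemma nhds_eq_comap_W1 (μ : ProbabilityMeasure X) : 𝓝 μ = comap (W1 · μ) (𝓝 0) := by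
  refine le_antisymm (tendsto_W1_nhds μ).le_comap ?_
  suffices Tendsto id (comap (W1 · μ) (𝓝 0)) (𝓝 μ) from this
  refine tendsto_iff_forall_lipschitz_integral_tendsto.2 fun f _ ⟨K, hf⟩ => ?_
  refine tendsto_iff_dist_tendsto_zero.2 (squeeze_zero (fun _ => dist_nonneg)
    (fun ν => abs_integral_sub_integral_le_mul_W1 hf ν μ) ?_)
  simpa using (tendsto_comap (f := (W1 · μ)) (x := 𝓝 0)).const_mul (K : ℝ)

/-- The Kantorovich–Wasserstein metric on probability measures; its topology is definitionally the
topology of weak convergence. -/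
noncomputable instance instPseudoMetricSpaceW1 : PseudoMetricSpace (ProbabilityMeasure X) :=
  let metric : PseudoMetricSpace (ProbabilityMeasure X) :=
    { dist := W1
      dist_self := W1_self
      dist_comm := W1_comm
      dist_triangle := W1_triangle }
  metric.replaceTopology <| TopologicalSpace.ext_nhds fun μ =>
    (nhds_eq_comap_W1 μ).trans (@nhds_comap_dist _ metric μ)

lemma dist_eq_W1 (μ ν : ProbabilityMeasure X) : dist μ ν = W1 μ ν := rfl

end KantorovichDistance

section BorelStructure

lemma opensMeasurableSpace_of_isInducing {Y ι : Type*} {Z : ι → Type*} [TopologicalSpace Y]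
    [SecondCountableTopology Y] [MeasurableSpace Y] [∀ i, TopologicalSpace (Z i)]
    [∀ i, MeasurableSpace (Z i)] [∀ i, OpensMeasurableSpace (Z i)] {f : Y → ∀ i, Z i}
    (hf : IsInducing f) (hmeas : ∀ i, Measurable (f · i)) : OpensMeasurableSpace Y := by
  have htop : ‹TopologicalSpace Y› =
      .generateFrom (⋃ i, {s | ∃ u, IsOpen u ∧ (f · i) ⁻¹' u = s}) := by
    rw [hf.eq_induced, induced_to_pi]
    exact (generateFrom_iUnion_isOpen fun i => .induced (f · i) inferInstance).symm
  refine ⟨(borel_eq_generateFrom_of_subbasis htop).trans_le (MeasurableSpace.generateFrom_le ?_)⟩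
  rintro _ hs
  obtain ⟨i, u, hu, rfl⟩ := Set.mem_iUnion.1 hs
  exact hmeas i hu.measurableSet

lemma isInducing_integral_boundedContinuousFunction {X : Type*} [TopologicalSpace X]
    [MeasurableSpace X] [OpensMeasurableSpace X] :
    IsInducing fun (μ : ProbabilityMeasure X) (f : BoundedContinuousFunction X ℝ) =>
      ∫ x, f x ∂(μ : Measure X) := by
  refine isInducing_iff_nhds.2 fun μ => le_antisymm ?_ ?_
  · exact (tendsto_pi_nhds.2
      (ProbabilityMeasure.tendsto_iff_forall_integral_tendsto.1 tendsto_id)).le_comap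
  · exact ProbabilityMeasure.tendsto_iff_forall_integral_tendsto.2
      (tendsto_pi_nhds.1 tendsto_comap)

lemma measurable_integral_probabilityMeasure {X : Type*} [MeasurableSpace X] {f : X → ℝ}
    (hf : StronglyMeasurable f) :
    Measurable fun μ : ProbabilityMeasure X => ∫ x, f x ∂(μ : Measure X) :=
  (hf.integral_kernel (κ := ⟨((↑) : ProbabilityMeasure X → Measure X),
    measurable_subtype_coe⟩)).measurable

lemma measurable_probabilityMeasure_of_continuous {X Y : Type*} [TopologicalSpace X]
    [HasOuterApproxClosed X] [MeasurableSpace X] [BorelSpace X] [TopologicalSpace Y]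
    [MeasurableSpace Y] [OpensMeasurableSpace Y] {κ : Y → ProbabilityMeasure X}
    (hκ : Continuous κ) : Measurable κ := by
  refine (Measurable.measure_of_isPiSystem_of_isProbabilityMeasure
    (μ := fun y => (κ y : Measure X))
    (BorelSpace.measurable_eq.trans borel_eq_generateFrom_isClosed)
    isPiSystem_isClosed fun F hF => ?_).subtype_mk
  refine UpperSemicontinuous.measurable (upperSemicontinuous_iff_limsup_le.2 fun y => ?_)
  exact ProbabilityMeasure.limsup_measure_closed_le_of_tendsto hκ.continuousAt hF

instance instBorelSpaceProbabilityMeasure {X : Type*} [MetricSpace X] [CompactSpace X]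
    [MeasurableSpace X] [BorelSpace X] : BorelSpace (ProbabilityMeasure X) := by
  have opens : OpensMeasurableSpace (ProbabilityMeasure X) :=
    opensMeasurableSpace_of_isInducing isInducing_integral_boundedContinuousFunction fun f =>
      measurable_integral_probabilityMeasure f.continuous.stronglyMeasurable
  refine ⟨le_antisymm (fun s hs => ?_) opens.borel_le⟩
  have hid := @measurable_probabilityMeasure_of_continuous X (ProbabilityMeasure X) _ _ _ _ _
    (borel _) (@OpensMeasurableSpace.mk _ _ (borel _) le_rfl) id continuous_id
  exact hid hs

end BorelStructure

section GiryMonad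

variable {A B C : Type*} [MeasurableSpace A] [MeasurableSpace B] [MeasurableSpace C]

lemma measurable_diracProba : Measurable (diracProba : A → ProbabilityMeasure A) :=
  Measure.measurable_dirac.subtype_mk

lemma measurable_probabilityMeasure_map {κ : C → ProbabilityMeasure A} (hκ : Measurable κ)
    {φ : A → B} (hφ : Measurable φ) : Measurable fun c => (κ c).map hφ.aemeasurable :=
  ((Measure.measurable_map φ hφ).comp (measurable_subtype_coe.comp hκ)).subtype_mk

lemma measurable_probabilityMeasure_prod {κ : C → ProbabilityMeasure A}
    {η : C → ProbabilityMeasure B} (hκ : Measurable κ) (hη : Measurable η) :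
    Measurable fun c => (κ c).prod (η c) :=
  (ProbabilityMeasure.measurable_fun_prod.comp (hκ.prodMk hη)).subtype_mk

lemma measurable_probabilityMeasure_pi {ι : Type*} [Fintype ι] {κ : C → ι → ProbabilityMeasure A}
    (hκ : Measurable κ) : Measurable fun c => ProbabilityMeasure.pi (κ c) := by
  refine (Measurable.measure_of_isPiSystem_of_isProbabilityMeasure
    (μ := fun c => Measure.pi fun i => (κ c i : Measure A)) generateFrom_pi.symm
    isPiSystem_pi ?_).subtype_mk
  rintro _ ⟨s, hs, rfl⟩
  simp_rw [Measure.pi_pi]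
  exact Finset.measurable_prod _ fun i _ => (Measure.measurable_coe (hs i trivial)).comp
    (measurable_subtype_coe.comp (measurable_pi_iff.1 hκ i))

open Classical in
/-- The bind of the Giry monad on probability measures: the law of a point drawn from `κ a`, where
`a` is drawn from `m`. It has this meaning only for measurable `κ`; otherwise the value is
arbitrary. -/
noncomputable def bindProba (m : ProbabilityMeasure A) (κ : A → ProbabilityMeasure B) :
    ProbabilityMeasure B :=
  if hκ : Measurable κ then
    (⟨(m : Measure A).bind fun a => κ a,
      isProbabilityMeasure_bind (measurable_subtype_coe.comp hκ).aemeasurable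
        (.of_forall fun a => inferInstanceAs (IsProbabilityMeasure (κ a : Measure B)))⟩ :
      ProbabilityMeasure B)
  else κ (Classical.choice m.nonempty)

lemma toMeasure_bindProba (m : ProbabilityMeasure A) {κ : A → ProbabilityMeasure B}
    (hκ : Measurable κ) : (bindProba m κ : Measure B) = (m : Measure A).bind fun a => κ a :=
  congrArg _ (dif_pos hκ)

lemma measurable_bindProba {κ : A → ProbabilityMeasure B} (hκ : Measurable κ) :
    Measurable fun m => bindProba m κ := by
  have hbind : Measurable fun m : ProbabilityMeasure A => (bindProba m κ : Measure B) := by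
    simp only [toMeasure_bindProba _ hκ]
    exact (Measure.measurable_bind' (measurable_subtype_coe.comp hκ)).comp measurable_subtype_coe
  exact hbind.subtype_mk

lemma integrable_and_integral_bindProba (m : ProbabilityMeasure A) {κ : A → ProbabilityMeasure B}
    (hκ : Measurable κ) {f : B → ℝ} (hf : Integrable f (bindProba m κ : Measure B)) :
    Integrable (fun a => ∫ b, f b ∂(κ a : Measure B)) (m : Measure A) ∧
      ∫ b, f b ∂(bindProba m κ : Measure B) =
        ∫ a, ∫ b, f b ∂(κ a : Measure B) ∂(m : Measure A) := by
  let k : ProbabilityTheory.Kernel A B :=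
    ⟨fun a => (κ a : Measure B), measurable_subtype_coe.comp hκ⟩
  have hcomp : (bindProba m κ : Measure B) =
      (k.comp (ProbabilityTheory.Kernel.const Unit (m : Measure A))) () :=
    toMeasure_bindProba m hκ
  rw [hcomp] at hf ⊢
  exact ⟨hf.integral_comp, ProbabilityTheory.Kernel.integral_comp hf⟩

lemma bindProba_diracProba {κ : A → ProbabilityMeasure B} (hκ : Measurable κ) (a : A) :
    bindProba (diracProba a) κ = κ a :=
  ProbabilityMeasure.toMeasure_injective <| (toMeasure_bindProba _ hκ).trans
    (Measure.dirac_bind (measurable_subtype_coe.comp hκ) a)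

lemma bindProba_map {m : ProbabilityMeasure A} {φ : A → B} (hφ : Measurable φ)
    {κ : B → ProbabilityMeasure C} (hκ : Measurable κ) :
    bindProba (m.map hφ.aemeasurable) κ = bindProba m (κ ∘ φ) := by
  refine ProbabilityMeasure.toMeasure_injective ?_
  rw [toMeasure_bindProba _ hκ, toMeasure_bindProba _ (hκ.comp hφ),
    ProbabilityMeasure.toMeasure_map]
  exact congrArg Measure.join (Measure.map_map (measurable_subtype_coe.comp hκ) hφ)

lemma map_bindProba {m : ProbabilityMeasure A} {κ : A → ProbabilityMeasure B} (hκ : Measurable κ)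
    {φ : B → C} (hφ : Measurable φ) :
    (bindProba m κ).map hφ.aemeasurable = bindProba m fun a => (κ a).map hφ.aemeasurable := by
  refine ProbabilityMeasure.toMeasure_injective ?_
  rw [toMeasure_bindProba _ (measurable_probabilityMeasure_map hκ hφ),
    ProbabilityMeasure.toMeasure_map, toMeasure_bindProba _ hκ]
  simp only [ProbabilityMeasure.toMeasure_map, ← Measure.bind_dirac_eq_map _ hφ]
  exact Measure.bind_bind (measurable_subtype_coe.comp hκ).aemeasurable
    (Measure.measurable_dirac.comp hφ).aemeasurable

lemma bindProba_diracProba_prod (c : C) (m : ProbabilityMeasure A)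
    {η : C × A → ProbabilityMeasure B} (hη : Measurable η) :
    bindProba ((diracProba c).prod m) η = bindProba m fun a => η (c, a) := by
  rw [← Function.comp_def η, ← bindProba_map measurable_prodMk_left hη]
  congr 1
  exact ProbabilityMeasure.toMeasure_injective (Measure.dirac_prod c)

lemma measurable_bindProba_prodMk {κ : C → ProbabilityMeasure A} (hκ : Measurable κ)
    {η : C × A → ProbabilityMeasure B} (hη : Measurable η) :
    Measurable fun c => bindProba (κ c) fun a => η (c, a) := by
  simpa only [Function.comp_def, bindProba_diracProba_prod _ _ hη] using
    (measurable_bindProba hη).comp (measurable_probabilityMeasure_prod measurable_diracProba hκ)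

end GiryMonad

section LipschitzKernels

variable {Y A B : Type*} [PseudoMetricSpace Y]
  [PseudoMetricSpace A] [CompactSpace A] [MeasurableSpace A] [BorelSpace A]
  [PseudoMetricSpace B] [CompactSpace B] [MeasurableSpace B] [BorelSpace B]

lemma measurable_of_lipschitzWith [MeasurableSpace Y] [OpensMeasurableSpace Y] {K : ℝ≥0}
    {κ : Y → ProbabilityMeasure A} (hκ : LipschitzWith K κ) : Measurable κ :=
  measurable_probabilityMeasure_of_continuous hκ.continuous

lemma lipschitzWith_of_abs_integral_sub_integral_le {K : ℝ≥0} {κ : Y → ProbabilityMeasure A}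
    (h : ∀ (y y' : Y) (f : A → ℝ), LipschitzWith 1 f →
      |∫ a, f a ∂(κ y : Measure A) - ∫ a, f a ∂(κ y' : Measure A)| ≤ K * dist y y') :
    LipschitzWith K κ :=
  .of_dist_le_mul fun y y' => W1_le (h y y')

lemma lipschitzWith_integral {K L : ℝ≥0} {κ : Y → ProbabilityMeasure A} (hκ : LipschitzWith K κ)
    {f : A → ℝ} (hf : LipschitzWith L f) :
    LipschitzWith (L * K) fun y => ∫ a, f a ∂(κ y : Measure A) :=
  .of_dist_le_mul fun y y' => (abs_integral_sub_integral_le_mul_W1 hf _ _).trans <| by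
    simpa only [NNReal.coe_mul, mul_assoc, dist_eq_W1] using
      mul_le_mul_of_nonneg_left (hκ.dist_le_mul y y') L.coe_nonneg

lemma lipschitzWith_diracProba : LipschitzWith 1 (diracProba : A → ProbabilityMeasure A) :=
  lipschitzWith_of_abs_integral_sub_integral_le fun a a' f hf => by
    simpa [diracProba, integral_dirac' _ _ hf.continuous.stronglyMeasurable, Real.dist_eq] using
      hf.dist_le_mul a a'

lemma W1_prod_le (μ μ' : ProbabilityMeasure A) (ν ν' : ProbabilityMeasure B) :
    W1 (μ.prod ν) (μ'.prod ν') ≤ W1 μ μ' + W1 ν ν' := by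
  refine W1_le fun f hf => ?_
  have hf_left (b : B) : LipschitzWith 1 fun a => f (a, b) := by
    simpa [Function.comp_def] using hf.comp (LipschitzWith.prodMk_right b)
  have hf_right (a : A) : LipschitzWith 1 fun b => f (a, b) := by
    simpa [Function.comp_def] using hf.comp (LipschitzWith.prodMk_left a)
  have inner_lipschitz (ρ : ProbabilityMeasure B) :
      LipschitzWith 1 fun a => ∫ b, f (a, b) ∂(ρ : Measure B) :=
    .of_dist_le_mul fun a a' => abs_integral_sub_integral_le
      (integrable_of_lipschitzWith (hf_right a) _) (integrable_of_lipschitzWith (hf_right a') _)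
      fun b => (hf_left b).dist_le_mul a a'
  have fubini (m : ProbabilityMeasure A) (ρ : ProbabilityMeasure B) :
      ∫ z, f z ∂(m.prod ρ : Measure (A × B)) =
        ∫ a, ∫ b, f (a, b) ∂(ρ : Measure B) ∂(m : Measure A) :=
    integral_prod f (integrable_of_lipschitzWith hf _)
  rw [fubini, fubini, add_comm]
  refine (abs_sub_le _ (∫ a, ∫ b, f (a, b) ∂(ν' : Measure B) ∂(μ : Measure A)) _).trans
    (add_le_add ?_ (abs_integral_sub_integral_le_W1 (inner_lipschitz ν') μ μ'))
  exact abs_integral_sub_integral_le (integrable_of_lipschitzWith (inner_lipschitz ν) _)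
    (integrable_of_lipschitzWith (inner_lipschitz ν') _)
    fun a => abs_integral_sub_integral_le_W1 (hf_right a) ν ν'

lemma lipschitzWith_prod {K L : ℝ≥0} {κ : Y → ProbabilityMeasure A} {η : Y → ProbabilityMeasure B}
    (hκ : LipschitzWith K κ) (hη : LipschitzWith L η) :
    LipschitzWith (K + L) fun y => (κ y).prod (η y) :=
  .of_dist_le_mul fun y y' => (W1_prod_le _ _ _ _).trans <| by
    simpa only [NNReal.coe_add, add_mul, dist_eq_W1] using
      add_le_add (hκ.dist_le_mul y y') (hη.dist_le_mul y y')

lemma W1_bindProba_le_integral {C : Type*} [MeasurableSpace C] (m : ProbabilityMeasure C)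
    {κ η : C → ProbabilityMeasure A} (hκ : Measurable κ) (hη : Measurable η) {g : C → ℝ}
    (hg : Integrable g (m : Measure C)) (h : ∀ c, W1 (κ c) (η c) ≤ g c) :
    W1 (bindProba m κ) (bindProba m η) ≤ ∫ c, g c ∂(m : Measure C) := by
  refine W1_le fun f hf => ?_
  obtain ⟨hκf, hκ_int⟩ := integrable_and_integral_bindProba m hκ (integrable_of_lipschitzWith hf _)
  obtain ⟨hηf, hη_int⟩ := integrable_and_integral_bindProba m hη (integrable_of_lipschitzWith hf _)
  rw [hκ_int, hη_int, ← integral_sub hκf hηf, ← Real.norm_eq_abs]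
  exact norm_integral_le_of_norm_le hg <| .of_forall fun c =>
    (abs_integral_sub_integral_le_W1 hf (κ c) (η c)).trans (h c)

lemma lipschitzWith_bindProba {L : ℝ≥0} {η : A → ProbabilityMeasure B} (hη : LipschitzWith L η) :
    LipschitzWith L fun m => bindProba m η :=
  .of_dist_le_mul fun μ ν => W1_le fun f hf => by
    have hηm := measurable_of_lipschitzWith hη
    rw [(integrable_and_integral_bindProba μ hηm (integrable_of_lipschitzWith hf _)).2,
      (integrable_and_integral_bindProba ν hηm (integrable_of_lipschitzWith hf _)).2]
    simpa [dist_eq_W1] using abs_integral_sub_integral_le_mul_W1 (lipschitzWith_integral hη hf) μ ν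

lemma lipschitzWith_bindProba_prodMk [CompactSpace Y] [MeasurableSpace Y] [BorelSpace Y]
    {K L : ℝ≥0} {κ : Y → ProbabilityMeasure A} (hκ : LipschitzWith K κ)
    {η : Y × A → ProbabilityMeasure B} (hη : LipschitzWith L η) :
    LipschitzWith (L * (1 + K)) fun y => bindProba (κ y) fun a => η (y, a) := by
  simpa only [Function.comp_def, bindProba_diracProba_prod _ _ (measurable_of_lipschitzWith hη)]
    using (lipschitzWith_bindProba hη).comp (lipschitzWith_prod lipschitzWith_diracProba hκ)

end LipschitzKernels

section MarkovChains

/-- The law at each time of the Markov chain with initial law `m` and transition `P t` from time `t`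
to time `t + 1`. -/
noncomputable def chainLaw {S : Type*} [MeasurableSpace S] (m : ProbabilityMeasure S)
    (P : ℕ → S → ProbabilityMeasure S) : ℕ → ProbabilityMeasure S
  | 0 => m
  | t + 1 => bindProba (chainLaw m P t) (P t)

variable {A S : Type*} [MeasurableSpace A]
  [PseudoMetricSpace S] [CompactSpace S] [MeasurableSpace S] [BorelSpace S]

/-- Approximate lumping: `hQP` says that `φ` nearly intertwines the steps of the two chains. -/
lemma W1_map_chainLaw_le {K : ℝ≥0} {e : ℝ} {φ : A → S} (hφ : Measurable φ)
    {P : ℕ → S → ProbabilityMeasure S} (hP : ∀ t, LipschitzWith K (P t))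
    {Q : ℕ → A → ProbabilityMeasure A} (hQ : ∀ t, Measurable (Q t))
    (hQP : ∀ t a, W1 ((Q t a).map hφ.aemeasurable) (P t (φ a)) ≤ e)
    {m : ProbabilityMeasure A} {n : ProbabilityMeasure S} (hmn : W1 (m.map hφ.aemeasurable) n ≤ e)
    (t : ℕ) :
    W1 ((chainLaw m Q t).map hφ.aemeasurable) (chainLaw n P t) ≤
      (∑ i ∈ Finset.range (t + 1), (K : ℝ) ^ i) * e := by
  induction t with
  | zero => simpa [chainLaw] using hmn
  | succ t ih =>
    have hPm := measurable_of_lipschitzWith (hP t)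
    have one_step : W1 ((chainLaw m Q (t + 1)).map hφ.aemeasurable)
        (bindProba ((chainLaw m Q t).map hφ.aemeasurable) (P t)) ≤ e := by
      rw [chainLaw, map_bindProba (hQ t) hφ, bindProba_map hφ hPm]
      simpa using W1_bindProba_le_integral (chainLaw m Q t)
        (measurable_probabilityMeasure_map (hQ t) hφ) (hPm.comp hφ) (integrable_const e) (hQP t)
    calc W1 ((chainLaw m Q (t + 1)).map hφ.aemeasurable) (chainLaw n P (t + 1))
        ≤ e + K * W1 ((chainLaw m Q t).map hφ.aemeasurable) (chainLaw n P t) :=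
          (W1_triangle _ _ _).trans <| add_le_add one_step <|
            (lipschitzWith_bindProba (hP t)).dist_le_mul _ _
      _ ≤ e + K * ((∑ i ∈ Finset.range (t + 1), (K : ℝ) ^ i) * e) := by gcongr
      _ = (∑ i ∈ Finset.range (t + 2), (K : ℝ) ^ i) * e := by
          rw [Finset.sum_range_succ' _ (t + 1)]
          simp only [pow_succ, ← Finset.sum_mul]
          ring

end MarkovChains

section EmpiricalMeasures

lemma integral_abs_sub_integral_le_sqrt_variance {Ω : Type*} [MeasurableSpace Ω] {P : Measure Ω}
    [IsProbabilityMeasure P] {Y : Ω → ℝ} (hY : MemLp Y 2 P) :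
    ∫ ω, |Y ω - ∫ ω', Y ω' ∂P| ∂P ≤ √(ProbabilityTheory.variance Y P) := by
  have hZ : MemLp (fun ω => |Y ω - ∫ ω', Y ω' ∂P|) 2 P := (hY.sub (memLp_const _)).abs
  have hvar := ProbabilityTheory.variance_eq_integral hY.aestronglyMeasurable.aemeasurable
  have habs := ProbabilityTheory.variance_nonneg (fun ω => |Y ω - ∫ ω', Y ω' ∂P|) P
  rw [ProbabilityTheory.variance_eq_sub hZ] at habs
  refine Real.le_sqrt_of_sq_le ?_
  simpa [hvar] using habs

variable {X : Type*} [MeasurableSpace X] [Nonempty X]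

lemma toMeasure_emp {N : ℕ} (hN : N ≠ 0) (x : Fin N → X) :
    (emp N x : Measure X) = (N : ℝ≥0∞)⁻¹ • ∑ i, Measure.dirac (x i) := by
  simp [emp, hN]

lemma measurable_emp (N : ℕ) : Measurable (emp (X := X) N) := by
  obtain rfl | hN := eq_or_ne N 0
  · exact measurable_of_finite _
  have hemp : Measurable fun x : Fin N → X => (emp N x : Measure X) := by
    simp_rw [toMeasure_emp hN]
    refine Measure.measurable_of_measurable_coe _ fun s hs => ?_
    simp only [Measure.smul_apply, Measure.coe_finsetSum, Finset.sum_apply, smul_eq_mul]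
    exact (Finset.measurable_sum _ fun i _ => (Measure.measurable_coe hs).comp
      (Measure.measurable_dirac.comp (measurable_pi_apply i))).const_mul _
  exact hemp.subtype_mk

lemma integral_emp {N : ℕ} (hN : N ≠ 0) (x : Fin N → X) {f : X → ℝ} (hf : StronglyMeasurable f) :
    ∫ y, f y ∂(emp N x : Measure X) = (N : ℝ)⁻¹ * ∑ i, f (x i) := by
  rw [toMeasure_emp hN, integral_smul_measure, integral_finsetSum_measure fun i _ =>
    integrable_dirac' hf (by simp)]
  simp [integral_dirac' _ _ hf]

lemma toMeasure_bindProba_emp {Y : Type*} [MeasurableSpace Y] {N : ℕ} (hN : N ≠ 0) (x : Fin N → X)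
    {κ : X → ProbabilityMeasure Y} (hκ : Measurable κ) :
    (bindProba (emp N x) κ : Measure Y) = (N : ℝ≥0∞)⁻¹ • ∑ i, (κ (x i) : Measure Y) := by
  rw [toMeasure_bindProba _ hκ, toMeasure_emp hN]
  have hκ' : Measurable fun a => (κ a : Measure Y) := measurable_subtype_coe.comp hκ
  ext s hs
  rw [Measure.bind_apply hs hκ'.aemeasurable]
  have hκs : Measurable fun a => (κ a : Measure Y) s := (Measure.measurable_coe hs).comp hκ'
  simp [lintegral_dirac' _ hκs]

end EmpiricalMeasures

section LawOfLargeNumbers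

variable {X : Type*} [PseudoMetricSpace X] [CompactSpace X] [MeasurableSpace X] [BorelSpace X]

lemma variance_le_sq_diam {f : X → ℝ} (hf : LipschitzWith 1 f) (ν : ProbabilityMeasure X) :
    ProbabilityTheory.variance f (ν : Measure X) ≤ Metric.diam (Set.univ : Set X) ^ 2 := by
  obtain ⟨z⟩ := ν.nonempty
  have hmem (x : X) : f x ∈ Set.Icc (f z - Metric.diam (Set.univ : Set X))
      (f z + Metric.diam (Set.univ : Set X)) := by
    have hxz : |f x - f z| ≤ Metric.diam (Set.univ : Set X) :=
      (hf.dist_le_mul x z).trans (by simpa using dist_le_diam_univ x z)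
    constructor <;> linarith [abs_le.1 hxz]
  refine (ProbabilityTheory.variance_le_sq_of_bounded (.of_forall hmem)
    hf.continuous.measurable.aemeasurable).trans_eq ?_
  ring

lemma variance_sum_pi_le {ι : Type*} [Fintype ι] (ν : ι → ProbabilityMeasure X) {f : X → ℝ}
    (hf : LipschitzWith 1 f) :
    ProbabilityTheory.variance (∑ i, fun x : ι → X => f (x i))
      (Measure.pi fun i => (ν i : Measure X)) ≤
      Fintype.card ι * Metric.diam (Set.univ : Set X) ^ 2 := by
  rw [ProbabilityTheory.variance_sum_pi fun i =>
    hf.continuous.memLp_of_hasCompactSupport (.of_compactSpace f)]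
  simpa using Finset.sum_le_sum fun i (_ : i ∈ Finset.univ) => variance_le_sq_diam hf (ν i)

lemma memLp_comp_eval {ι : Type*} [Fintype ι] (ν : ι → ProbabilityMeasure X) {f : X → ℝ}
    (hf : Continuous f) (i : ι) :
    MemLp (fun x : ι → X => f (x i)) 2 (Measure.pi fun i => (ν i : Measure X)) :=
  (hf.comp (continuous_apply i)).memLp_of_hasCompactSupport (.of_compactSpace _)

variable [Nonempty X] {N : ℕ} (ν : Fin N → ProbabilityMeasure X) {νbar : ProbabilityMeasure X}

lemma memLp_integral_emp (hN : N ≠ 0) {f : X → ℝ} (hf : Continuous f) :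
    MemLp (fun x => ∫ y, f y ∂(emp N x : Measure X)) 2
      (Measure.pi fun i => (ν i : Measure X)) := by
  simp only [integral_emp hN _ hf.stronglyMeasurable]
  exact (memLp_finsetSum _ fun i _ => memLp_comp_eval ν hf i).const_mul _

lemma integral_integral_emp (hN : N ≠ 0)
    (hν : (νbar : Measure X) = (N : ℝ≥0∞)⁻¹ • ∑ i, (ν i : Measure X)) {f : X → ℝ}
    (hf : Continuous f) :
    ∫ x, ∫ y, f y ∂(emp N x : Measure X) ∂(Measure.pi fun i => (ν i : Measure X)) =
      ∫ y, f y ∂(νbar : Measure X) := by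
  rw [hν, integral_smul_measure, integral_finsetSum_measure fun i _ =>
    hf.integrable_of_hasCompactSupport (.of_compactSpace f)]
  simp only [integral_emp hN _ hf.stronglyMeasurable]
  rw [integral_const_mul,
    integral_finsetSum _ fun i _ => (memLp_comp_eval ν hf i).integrable one_le_two]
  simp [integral_comp_eval (μ := fun i => (ν i : Measure X)) hf.aestronglyMeasurable]

lemma variance_integral_emp_le (hN : N ≠ 0) {f : X → ℝ} (hf : LipschitzWith 1 f) :
    ProbabilityTheory.variance (fun x => ∫ y, f y ∂(emp N x : Measure X))
      (Measure.pi fun i => (ν i : Measure X)) ≤ Metric.diam (Set.univ : Set X) ^ 2 / N := by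
  simp only [integral_emp hN _ hf.continuous.stronglyMeasurable]
  rw [ProbabilityTheory.variance_const_mul]
  calc ((N : ℝ)⁻¹) ^ 2 * _ ≤ ((N : ℝ)⁻¹) ^ 2 * (N * Metric.diam (Set.univ : Set X) ^ 2) := by
        gcongr
        simpa [Finset.sum_fn] using variance_sum_pi_le ν hf
    _ = Metric.diam (Set.univ : Set X) ^ 2 / N := by field_simp

lemma integral_abs_integral_emp_sub_le (hN : N ≠ 0)
    (hν : (νbar : Measure X) = (N : ℝ≥0∞)⁻¹ • ∑ i, (ν i : Measure X)) {f : X → ℝ}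
    (hf : LipschitzWith 1 f) :
    ∫ x, |∫ y, f y ∂(emp N x : Measure X) - ∫ y, f y ∂(νbar : Measure X)|
      ∂(Measure.pi fun i => (ν i : Measure X)) ≤ Metric.diam (Set.univ : Set X) / √N := by
  rw [← integral_integral_emp ν hN hν hf.continuous]
  calc _ ≤ √(ProbabilityTheory.variance (fun x => ∫ y, f y ∂(emp N x : Measure X))
        (Measure.pi fun i => (ν i : Measure X))) :=
        integral_abs_sub_integral_le_sqrt_variance (memLp_integral_emp ν hN hf.continuous)
    _ ≤ √(Metric.diam (Set.univ : Set X) ^ 2 / N) :=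
        Real.sqrt_le_sqrt (variance_integral_emp_le ν hN hf)
    _ = Metric.diam (Set.univ : Set X) / √N := by
        rw [Real.sqrt_div (sq_nonneg _), Real.sqrt_sq Metric.diam_nonneg]

end LawOfLargeNumbers

section UniformLawOfLargeNumbers

variable {X : Type*} [MetricSpace X] [CompactSpace X] [MeasurableSpace X] [BorelSpace X]
  [Nonempty X]

lemma integrable_W1_emp {N : ℕ} (m : Measure (Fin N → X)) [IsFiniteMeasure m]
    (μ : ProbabilityMeasure X) : Integrable (fun x => W1 (emp N x) μ) m :=
  (integrable_of_lipschitzWith (LipschitzWith.dist_left μ) (m.map (emp N))).comp_measurable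
    (measurable_emp N)

lemma eventually_integral_W1_emp_le {ε : ℝ} (hε : 0 < ε) :
    ∀ᶠ N : ℕ in atTop, ∀ (ν : Fin N → ProbabilityMeasure X) (νbar : ProbabilityMeasure X),
      (νbar : Measure X) = (N : ℝ≥0∞)⁻¹ • ∑ i, (ν i : Measure X) →
        ∫ x, W1 (emp N x) νbar ∂(Measure.pi fun i => (ν i : Measure X)) ≤ ε := by
  obtain ⟨s, hs, hnet⟩ := exists_finset_W1_le (X := X) (half_pos hε)
  have rate :
      Tendsto (fun N : ℕ => s.card * (Metric.diam (Set.univ : Set X) / √N)) atTop (𝓝 0) := by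
    simpa using
      ((Real.tendsto_sqrt_atTop.comp tendsto_natCast_atTop_atTop).const_div_atTop _).const_mul
      (s.card : ℝ)
  filter_upwards [rate.eventually_le_const (half_pos hε), eventually_ne_atTop 0]
    with N hrate hN ν νbar hν
  have hint (f) (hf : f ∈ s) : Integrable (fun x =>
      |∫ y, f y ∂(emp N x : Measure X) - ∫ y, f y ∂(νbar : Measure X)|)
      (Measure.pi fun i => (ν i : Measure X)) :=
    (((memLp_integral_emp ν hN (hs f hf).continuous).integrable one_le_two).sub
      (integrable_const _)).abs
  calc ∫ x, W1 (emp N x) νbar ∂(Measure.pi fun i => (ν i : Measure X))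
      ≤ ∫ x, (ε / 2 + ∑ f ∈ s, |∫ y, f y ∂(emp N x : Measure X) - ∫ y, f y ∂(νbar : Measure X)|)
          ∂(Measure.pi fun i => (ν i : Measure X)) :=
        integral_mono (integrable_W1_emp _ _)
          ((integrable_const _).add (integrable_finsetSum _ hint))
          fun x => hnet _ _
    _ = ε / 2 + ∑ f ∈ s, ∫ x, |∫ y, f y ∂(emp N x : Measure X) - ∫ y, f y ∂(νbar : Measure X)|
          ∂(Measure.pi fun i => (ν i : Measure X)) := by
        rw [integral_add (integrable_const _) (integrable_finsetSum _ hint),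
          integral_finsetSum _ hint]
        simp
    _ ≤ ε / 2 + ∑ _f ∈ s, Metric.diam (Set.univ : Set X) / √N := by
        gcongr with f hf
        exact integral_abs_integral_emp_sub_le ν hN hν (hs f hf)
    _ ≤ ε := by
        rw [Finset.sum_const, nsmul_eq_mul]
        linarith

end UniformLawOfLargeNumbers

section MeanFieldControl

variable {X U X0 U0 : Type*} [MeasurableSpace X] [MeasurableSpace U] [MeasurableSpace X0]
  [MeasurableSpace U0]

/-- The closed-loop law of the next state of a minor agent, given `((x⁰, u⁰, μ), x)`, when the minor
agents use the decision rule `q`. -/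
noncomputable def minorStep (p : X → U → X0 → U0 → ProbabilityMeasure X → ProbabilityMeasure X)
    (q : X → X0 → ProbabilityMeasure X → ProbabilityMeasure U)
    (z : (X0 × U0 × ProbabilityMeasure X) × X) : ProbabilityMeasure X :=
  bindProba (q z.2 z.1.1 z.1.2.2) fun u => p z.2 u z.1.1 z.1.2.1 z.1.2.2

/-- The deterministic mean field transition `T(x⁰, u⁰, μ, μ ⊗ q(x⁰, μ))`. -/
noncomputable def meanFieldStep
    (p : X → U → X0 → U0 → ProbabilityMeasure X → ProbabilityMeasure X)
    (q : X → X0 → ProbabilityMeasure X → ProbabilityMeasure U)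
    (s : X0 × U0 × ProbabilityMeasure X) : ProbabilityMeasure X :=
  bindProba s.2.2 fun x => minorStep p q (s, x)

/-- The joint law of `(x⁰, u⁰, c)` when the major agent, in state `x⁰`, draws `u⁰` from its decision
rule `q0` on observing the mean field `μ`. The component `c` is `μ` itself in the limiting system
and the vector of minor states in the `N`-agent system. -/
noncomputable def majorAction {C : Type*} [MeasurableSpace C]
    (q0 : X0 → ProbabilityMeasure X → ProbabilityMeasure U0) (x0 : X0) (μ : ProbabilityMeasure X)
    (c : C) : ProbabilityMeasure (X0 × U0 × C) :=
  (diracProba x0).prod ((q0 x0 μ).prod (diracProba c))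

/-- One step of the limiting system whose mean field evolves by `T`; the decision rule `q0` of the
major agent is the one in force after the step. -/
noncomputable def limitStep (p0 : X0 → U0 → ProbabilityMeasure X → ProbabilityMeasure X0)
    (q0 : X0 → ProbabilityMeasure X → ProbabilityMeasure U0)
    (T : X0 × U0 × ProbabilityMeasure X → ProbabilityMeasure X)
    (s : X0 × U0 × ProbabilityMeasure X) : ProbabilityMeasure (X0 × U0 × ProbabilityMeasure X) :=
  bindProba (p0 s.1 s.2.1 s.2.2) fun y0 => majorAction q0 y0 (T s) (T s)

/-- The law of `(x⁰_t, u⁰_t, μ_t)` in the limiting system. -/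
noncomputable def limitLaw (p : X → U → X0 → U0 → ProbabilityMeasure X → ProbabilityMeasure X)
    (p0 : X0 → U0 → ProbabilityMeasure X → ProbabilityMeasure X0)
    (q : ℕ → X → X0 → ProbabilityMeasure X → ProbabilityMeasure U)
    (q0 : ℕ → X0 → ProbabilityMeasure X → ProbabilityMeasure U0)
    (μ0 : ProbabilityMeasure X) (x00 : X0) :
    ℕ → ProbabilityMeasure (X0 × U0 × ProbabilityMeasure X) :=
  chainLaw (majorAction (q0 0) x00 μ0 μ0)
    fun t => limitStep p0 (q0 (t + 1)) (meanFieldStep p (q t))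

section NAgents

variable [Nonempty X]

/-- The mean field state `(x⁰, u⁰, μ^N)` of an `N`-agent state `(x⁰, u⁰, x)`. -/
noncomputable def empState (N : ℕ) (s : X0 × U0 × (Fin N → X)) : X0 × U0 × ProbabilityMeasure X :=
  (s.1, s.2.1, emp N s.2.2)

/-- The law of the `N`-agent state `(x⁰, u⁰, x)` when `(x⁰, x)` is drawn from `m` and the major
agent then draws `u⁰` from its decision rule `q0`. -/
noncomputable def agentAction {N : ℕ} (q0 : X0 → ProbabilityMeasure X → ProbabilityMeasure U0)
    (m : ProbabilityMeasure (X0 × (Fin N → X))) : ProbabilityMeasure (X0 × U0 × (Fin N → X)) :=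
  bindProba m fun y => majorAction q0 y.1 (emp N y.2) y.2

/-- One step of the `N`-agent system; the decision rule `q0` of the major agent is the one in force
after the step. -/
noncomputable def agentStep (p : X → U → X0 → U0 → ProbabilityMeasure X → ProbabilityMeasure X)
    (p0 : X0 → U0 → ProbabilityMeasure X → ProbabilityMeasure X0)
    (q : X → X0 → ProbabilityMeasure X → ProbabilityMeasure U)
    (q0 : X0 → ProbabilityMeasure X → ProbabilityMeasure U0) (N : ℕ)
    (s : X0 × U0 × (Fin N → X)) : ProbabilityMeasure (X0 × U0 × (Fin N → X)) :=
  agentAction q0 <| (p0 s.1 s.2.1 (emp N s.2.2)).prod <|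
    ProbabilityMeasure.pi fun i => minorStep p q (empState N s, s.2.2 i)

/-- The law of `(x⁰_t, u⁰_t, (x^i_t)_i)` in the `N`-agent system. -/
noncomputable def agentLaw (p : X → U → X0 → U0 → ProbabilityMeasure X → ProbabilityMeasure X)
    (p0 : X0 → U0 → ProbabilityMeasure X → ProbabilityMeasure X0)
    (q : ℕ → X → X0 → ProbabilityMeasure X → ProbabilityMeasure U)
    (q0 : ℕ → X0 → ProbabilityMeasure X → ProbabilityMeasure U0)
    (μ0 : ProbabilityMeasure X) (x00 : X0) (N : ℕ) :
    ℕ → ProbabilityMeasure (X0 × U0 × (Fin N → X)) :=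
  chainLaw (agentAction (q0 0) ((diracProba x00).prod (ProbabilityMeasure.pi fun _ => μ0)))
    fun t => agentStep p p0 (q t) (q0 (t + 1)) N

end NAgents

lemma toMeasure_majorAction {C : Type*} [MeasurableSpace C]
    (q0 : X0 → ProbabilityMeasure X → ProbabilityMeasure U0) (x0 : X0) (μ : ProbabilityMeasure X)
    (c : C) : (majorAction q0 x0 μ c : Measure (X0 × U0 × C)) =
      (q0 x0 μ : Measure U0).map fun u0 => (x0, u0, c) := by
  change (Measure.dirac x0).prod ((q0 x0 μ : Measure U0).prod (Measure.dirac c)) = _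
  rw [Measure.prod_dirac, Measure.dirac_prod,
    Measure.map_map measurable_prodMk_left measurable_prodMk_right]
  rfl

lemma map_majorAction {C D : Type*} [MeasurableSpace C] [MeasurableSpace D]
    (q0 : X0 → ProbabilityMeasure X → ProbabilityMeasure U0) (x0 : X0) (μ : ProbabilityMeasure X)
    (c : C) {φ : C → D} (hφ : Measurable φ) :
    (majorAction q0 x0 μ c : Measure (X0 × U0 × C)).map (Prod.map id (Prod.map id φ)) =
      majorAction q0 x0 μ (φ c) := by
  rw [toMeasure_majorAction, toMeasure_majorAction, Measure.map_map (by fun_prop) (by fun_prop)]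
  rfl

lemma measurable_majorAction {C D : Type*} [MeasurableSpace C] [MeasurableSpace D]
    {q0 : X0 → ProbabilityMeasure X → ProbabilityMeasure U0} (hq0 : Measurable ↿q0)
    {x0 : D → X0} (hx0 : Measurable x0) {μ : D → ProbabilityMeasure X} (hμ : Measurable μ)
    {c : D → C} (hc : Measurable c) : Measurable fun d => majorAction q0 (x0 d) (μ d) (c d) :=
  measurable_probabilityMeasure_prod (measurable_diracProba.comp hx0) <|
    measurable_probabilityMeasure_prod (hq0.comp (hx0.prodMk hμ)) (measurable_diracProba.comp hc)

variable {p : X → U → X0 → U0 → ProbabilityMeasure X → ProbabilityMeasure X}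
  {p0 : X0 → U0 → ProbabilityMeasure X → ProbabilityMeasure X0}

lemma measurable_minorStep (hp : Measurable ↿p)
    {q : X → X0 → ProbabilityMeasure X → ProbabilityMeasure U} (hq : Measurable ↿q) :
    Measurable (minorStep p q) := by
  have hrule : Measurable fun z : (X0 × U0 × ProbabilityMeasure X) × X => q z.2 z.1.1 z.1.2.2 :=
    hq.comp (by fun_prop : Measurable fun z : (X0 × U0 × ProbabilityMeasure X) × X =>
      (z.2, z.1.1, z.1.2.2))
  have hkernel : Measurable fun w : ((X0 × U0 × ProbabilityMeasure X) × X) × U =>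
      p w.1.2 w.2 w.1.1.1 w.1.1.2.1 w.1.1.2.2 :=
    hp.comp (by fun_prop : Measurable fun w : ((X0 × U0 × ProbabilityMeasure X) × X) × U =>
      (w.1.2, w.2, w.1.1.1, w.1.1.2.1, w.1.1.2.2))
  exact measurable_bindProba_prodMk hrule hkernel

lemma measurable_meanFieldStep (hp : Measurable ↿p)
    {q : X → X0 → ProbabilityMeasure X → ProbabilityMeasure U} (hq : Measurable ↿q) :
    Measurable (meanFieldStep p q) :=
  measurable_bindProba_prodMk measurable_snd.snd (measurable_minorStep hp hq)

lemma toMeasure_meanFieldStep (hp : Measurable ↿p)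
    {q : X → X0 → ProbabilityMeasure X → ProbabilityMeasure U} (hq : Measurable ↿q)
    (x0 : X0) (u0 : U0) (μ : ProbabilityMeasure X) :
    (meanFieldStep p q (x0, u0, μ) : Measure X) = (μ : Measure X).bind fun x =>
      (q x x0 μ : Measure U).bind fun u => (p x u x0 u0 μ : Measure X) := by
  have hminor : Measurable fun x => minorStep p q ((x0, u0, μ), x) :=
    (measurable_minorStep hp hq).comp measurable_prodMk_left
  have hkernel (x : X) : Measurable fun u => p x u x0 u0 μ :=
    hp.comp (by fun_prop : Measurable fun u : U => (x, u, x0, u0, μ))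
  exact (toMeasure_bindProba _ hminor).trans <|
    congrArg _ (funext fun x => toMeasure_bindProba _ (hkernel x))

lemma measurable_limitStep (hp0 : Measurable ↿p0)
    {q0 : X0 → ProbabilityMeasure X → ProbabilityMeasure U0} (hq0 : Measurable ↿q0)
    {T : X0 × U0 × ProbabilityMeasure X → ProbabilityMeasure X} (hT : Measurable T) :
    Measurable (limitStep p0 q0 T) :=
  measurable_bindProba_prodMk hp0 <| measurable_majorAction hq0 measurable_snd
    (hT.comp measurable_fst) (hT.comp measurable_fst)

lemma toMeasure_limitLaw (hp : Measurable ↿p) (hp0 : Measurable ↿p0)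
    {q : ℕ → X → X0 → ProbabilityMeasure X → ProbabilityMeasure U} (hq : ∀ t, Measurable ↿(q t))
    {q0 : ℕ → X0 → ProbabilityMeasure X → ProbabilityMeasure U0} (hq0 : ∀ t, Measurable ↿(q0 t))
    (μ0 : ProbabilityMeasure X) (x00 : X0) (t : ℕ) :
    (limitLaw p p0 q q0 μ0 x00 t : Measure (X0 × U0 × ProbabilityMeasure X)) =
      m3LimLaw p0 q0 (fun t x0 u0 μ => meanFieldStep p (q t) (x0, u0, μ)) μ0 x00 t := by
  induction t with
  | zero => exact toMeasure_majorAction ..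
  | succ t ih =>
    have hT := measurable_meanFieldStep hp (hq t)
    have haction (s : X0 × U0 × ProbabilityMeasure X) : Measurable fun y0 =>
        majorAction (q0 (t + 1)) y0 (meanFieldStep p (q t) s) (meanFieldStep p (q t) s) :=
      measurable_majorAction (hq0 (t + 1)) measurable_id measurable_const measurable_const
    rw [limitLaw, chainLaw, toMeasure_bindProba _ (measurable_limitStep hp0 (hq0 (t + 1)) hT),
      ← limitLaw, ih]
    simp only [limitStep, toMeasure_bindProba _ (haction _), toMeasure_majorAction]
    rfl

section NAgents

variable [Nonempty X]

lemma measurable_empState (N : ℕ) :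
    Measurable (empState N : X0 × U0 × (Fin N → X) → X0 × U0 × ProbabilityMeasure X) :=
  measurable_fst.prodMk (measurable_snd.fst.prodMk ((measurable_emp N).comp measurable_snd.snd))

lemma measurable_majorAction_emp {N : ℕ}
    {q0 : X0 → ProbabilityMeasure X → ProbabilityMeasure U0} (hq0 : Measurable ↿q0) :
    Measurable fun y : X0 × (Fin N → X) => majorAction q0 y.1 (emp N y.2) y.2 :=
  measurable_majorAction hq0 measurable_fst ((measurable_emp N).comp measurable_snd) measurable_snd

lemma measurable_agentStep (hp : Measurable ↿p) (hp0 : Measurable ↿p0)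
    {q : X → X0 → ProbabilityMeasure X → ProbabilityMeasure U} (hq : Measurable ↿q)
    {q0 : X0 → ProbabilityMeasure X → ProbabilityMeasure U0} (hq0 : Measurable ↿q0) (N : ℕ) :
    Measurable (agentStep p p0 q q0 N) := by
  have hminor (i : Fin N) : Measurable fun s : X0 × U0 × (Fin N → X) =>
      minorStep p q (empState N s, s.2.2 i) :=
    (measurable_minorStep hp hq).comp <|
      (measurable_empState N).prodMk ((measurable_pi_apply i).comp measurable_snd.snd)
  exact (measurable_bindProba (measurable_majorAction_emp hq0)).comp <|
    measurable_probabilityMeasure_prod (hp0.comp (measurable_empState N))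
      (measurable_probabilityMeasure_pi (measurable_pi_lambda _ hminor))

lemma toMeasure_agentAction {N : ℕ}
    {q0 : X0 → ProbabilityMeasure X → ProbabilityMeasure U0} (hq0 : Measurable ↿q0)
    (m : ProbabilityMeasure (X0 × (Fin N → X))) :
    (agentAction q0 m : Measure (X0 × U0 × (Fin N → X))) =
      (m : Measure (X0 × (Fin N → X))).bind fun y =>
        (q0 y.1 (emp N y.2) : Measure U0).map fun u0 => (y.1, u0, y.2) := by
  simp only [agentAction, toMeasure_bindProba _ (measurable_majorAction_emp hq0),
    toMeasure_majorAction]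

lemma map_empState_agentAction {N : ℕ}
    {q0 : X0 → ProbabilityMeasure X → ProbabilityMeasure U0} (hq0 : Measurable ↿q0)
    (m : ProbabilityMeasure (X0 × (Fin N → X))) :
    (agentAction q0 m).map (measurable_empState N).aemeasurable =
      bindProba m fun y => majorAction q0 y.1 (emp N y.2) (emp N y.2) := by
  rw [agentAction, map_bindProba (measurable_majorAction_emp hq0) (measurable_empState N)]
  exact congrArg _ <| funext fun y => ProbabilityMeasure.toMeasure_injective <|
    map_majorAction q0 y.1 (emp N y.2) y.2 (measurable_emp N)

lemma toMeasure_agentLaw (hp : Measurable ↿p) (hp0 : Measurable ↿p0)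
    {q : ℕ → X → X0 → ProbabilityMeasure X → ProbabilityMeasure U} (hq : ∀ t, Measurable ↿(q t))
    {q0 : ℕ → X0 → ProbabilityMeasure X → ProbabilityMeasure U0} (hq0 : ∀ t, Measurable ↿(q0 t))
    (μ0 : ProbabilityMeasure X) (x00 : X0) (N t : ℕ) :
    (agentLaw p p0 q q0 μ0 x00 N t : Measure (X0 × U0 × (Fin N → X))) =
      m3LawN p p0 q q0 μ0 x00 N t := by
  induction t with
  | zero =>
    have haction := measurable_majorAction_emp (N := N) (hq0 0)
    have haction' : Measurable fun x => majorAction (q0 0) x00 (emp N x) x :=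
      measurable_majorAction (hq0 0) measurable_const (measurable_emp N) measurable_id
    rw [agentLaw, chainLaw, agentAction, bindProba_diracProba_prod _ _ haction,
      toMeasure_bindProba _ haction']
    simp only [toMeasure_majorAction]
    rfl
  | succ t ih =>
    have hkernel (s : X0 × U0 × (Fin N → X)) (i : Fin N) : Measurable fun u =>
        p (s.2.2 i) u s.1 s.2.1 (emp N s.2.2) :=
      hp.comp (by fun_prop : Measurable fun u : U =>
        (s.2.2 i, u, s.1, s.2.1, emp N s.2.2))
    rw [agentLaw, chainLaw,
      toMeasure_bindProba _ (measurable_agentStep hp hp0 (hq t) (hq0 (t + 1)) N), ← agentLaw, ih]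
    simp only [agentStep, toMeasure_agentAction (hq0 (t + 1)), m3LawN, minorStep, empState,
      ProbabilityMeasure.toMeasure_prod, ProbabilityMeasure.toMeasure_pi,
      toMeasure_bindProba _ (hkernel _ _)]

end NAgents

end MeanFieldControl

section PropagationOfChaos

variable {X U X0 U0 : Type*}
  [MetricSpace X] [CompactSpace X] [MeasurableSpace X] [BorelSpace X] [MeasurableSpace U]
  [PseudoMetricSpace X0] [CompactSpace X0] [MeasurableSpace X0] [BorelSpace X0]
  [PseudoMetricSpace U0] [CompactSpace U0] [MeasurableSpace U0] [BorelSpace U0]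
  {Kp Kp0 Kq : ℝ≥0}
  {p : X → U → X0 → U0 → ProbabilityMeasure X → ProbabilityMeasure X}
  {p0 : X0 → U0 → ProbabilityMeasure X → ProbabilityMeasure X0}

lemma lipschitzWith_majorAction {q0 : X0 → ProbabilityMeasure X → ProbabilityMeasure U0}
    (hq0 : LipschitzWith Kq ↿q0) :
    LipschitzWith (Kq + 2) fun z : X0 × ProbabilityMeasure X => majorAction q0 z.1 z.2 z.2 := by
  rw [show Kq + 2 = 1 * 1 + (Kq + 1 * 1) by ring]
  exact lipschitzWith_prod (lipschitzWith_diracProba.comp LipschitzWith.prod_fst)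
    (lipschitzWith_prod hq0 (lipschitzWith_diracProba.comp LipschitzWith.prod_snd))

lemma lipschitzWith_limitStep {KT : ℝ≥0} (hp0 : LipschitzWith Kp0 ↿p0)
    {q0 : X0 → ProbabilityMeasure X → ProbabilityMeasure U0} (hq0 : LipschitzWith Kq ↿q0)
    {T : X0 × U0 × ProbabilityMeasure X → ProbabilityMeasure X} (hT : LipschitzWith KT T) :
    LipschitzWith ((Kq + 2) * max 1 KT * (1 + Kp0)) (limitStep p0 q0 T) := by
  have hnext : LipschitzWith (max 1 KT) fun z : (X0 × U0 × ProbabilityMeasure X) × X0 =>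
      (z.2, T z.1) := by
    have := LipschitzWith.prod_snd.prodMk
      (hT.comp (LipschitzWith.prod_fst (α := X0 × U0 × ProbabilityMeasure X) (β := X0)))
    rwa [mul_one] at this
  have haction : LipschitzWith ((Kq + 2) * max 1 KT)
      fun z : (X0 × U0 × ProbabilityMeasure X) × X0 => majorAction q0 z.2 (T z.1) (T z.1) := by
    have := (lipschitzWith_majorAction hq0).comp hnext
    exact this
  have := lipschitzWith_bindProba_prodMk hp0 haction
  exact this

lemma W1_map_agentAction_le [Nonempty X] {N : ℕ}
    {q0 : X0 → ProbabilityMeasure X → ProbabilityMeasure U0} (hq0 : LipschitzWith Kq ↿q0)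
    (ρ : ProbabilityMeasure X0) (m : ProbabilityMeasure (Fin N → X)) (μ : ProbabilityMeasure X) :
    W1 ((agentAction q0 (ρ.prod m)).map (measurable_empState N).aemeasurable)
      (bindProba ρ fun y0 => majorAction q0 y0 μ μ) ≤
        (Kq + 2) * ∫ x, W1 (emp N x) μ ∂(m : Measure (Fin N → X)) := by
  have hq0m := measurable_of_lipschitzWith hq0
  have hemp : Measurable fun y : X0 × (Fin N → X) => emp N y.2 :=
    (measurable_emp N).comp measurable_snd
  have haction : Measurable fun y0 => majorAction q0 y0 μ μ :=
    measurable_majorAction hq0m measurable_id measurable_const measurable_const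
  have hlimit : bindProba ρ (fun y0 => majorAction q0 y0 μ μ) =
      bindProba (ρ.prod m) fun y => majorAction q0 y.1 μ μ := by
    have := bindProba_map (m := ρ.prod m) measurable_fst haction
    rwa [ProbabilityMeasure.map_fst_prod] at this
  rw [map_empState_agentAction hq0m, hlimit]
  calc _ ≤ ∫ y, (Kq + 2) * W1 (emp N y.2) μ ∂(ρ.prod m : Measure (X0 × (Fin N → X))) := by
        refine W1_bindProba_le_integral _ (measurable_majorAction hq0m measurable_fst hemp hemp)
          (haction.comp measurable_fst)
          (((integrable_W1_emp (m : Measure (Fin N → X)) μ).comp_snd _).const_mul _) fun y => ?_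
        have := (lipschitzWith_majorAction hq0).dist_le_mul (y.1, emp N y.2) (y.1, μ)
        rwa [dist_prod_same_left] at this
    _ = _ := by
        rw [integral_const_mul, ProbabilityMeasure.toMeasure_prod,
          integral_fun_snd fun x => W1 (emp N x) μ]
        simp

lemma W1_map_agentStep_le [Nonempty X] {N : ℕ} (hN : N ≠ 0) {e : ℝ}
    (hlln : ∀ (ν : Fin N → ProbabilityMeasure X) (νbar : ProbabilityMeasure X),
      (νbar : Measure X) = (N : ℝ≥0∞)⁻¹ • ∑ i, (ν i : Measure X) →
        ∫ x, W1 (emp N x) νbar ∂(Measure.pi fun i => (ν i : Measure X)) ≤ e)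
    (hp : Measurable ↿p) {q : X → X0 → ProbabilityMeasure X → ProbabilityMeasure U}
    (hq : Measurable ↿q) {q0 : X0 → ProbabilityMeasure X → ProbabilityMeasure U0}
    (hq0 : LipschitzWith Kq ↿q0) (s : X0 × U0 × (Fin N → X)) :
    W1 ((agentStep p p0 q q0 N s).map (measurable_empState N).aemeasurable)
      (limitStep p0 q0 (meanFieldStep p q) (empState N s)) ≤ (Kq + 2) * e := by
  refine (W1_map_agentAction_le hq0 (p0 s.1 s.2.1 (emp N s.2.2)) _
    (meanFieldStep p q (empState N s))).trans ?_
  gcongr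
  exact hlln _ _ <| toMeasure_bindProba_emp hN s.2.2 <|
    (measurable_minorStep hp hq).comp measurable_prodMk_left

lemma W1_map_agentLaw_le [Nonempty X] {N : ℕ} (hN : N ≠ 0) {e : ℝ}
    (hlln : ∀ (ν : Fin N → ProbabilityMeasure X) (νbar : ProbabilityMeasure X),
      (νbar : Measure X) = (N : ℝ≥0∞)⁻¹ • ∑ i, (ν i : Measure X) →
        ∫ x, W1 (emp N x) νbar ∂(Measure.pi fun i => (ν i : Measure X)) ≤ e)
    (hp : Measurable ↿p) (hp0 : Measurable ↿p0)
    {q : ℕ → X → X0 → ProbabilityMeasure X → ProbabilityMeasure U} (hq : ∀ t, Measurable ↿(q t))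
    {q0 : ℕ → X0 → ProbabilityMeasure X → ProbabilityMeasure U0}
    (hq0 : ∀ t, LipschitzWith Kq ↿(q0 t)) {K : ℝ≥0}
    (hstep : ∀ t, LipschitzWith K (limitStep p0 (q0 (t + 1)) (meanFieldStep p (q t))))
    (μ0 : ProbabilityMeasure X) (x00 : X0) (t : ℕ) :
    W1 ((agentLaw p p0 q q0 μ0 x00 N t).map (measurable_empState N).aemeasurable)
      (limitLaw p p0 q q0 μ0 x00 t) ≤
        (∑ i ∈ Finset.range (t + 1), (K : ℝ) ^ i) * ((Kq + 2) * e) := by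
  have hq0m (t : ℕ) := measurable_of_lipschitzWith (hq0 t)
  have haction : Measurable fun y0 => majorAction (q0 0) y0 μ0 μ0 :=
    measurable_majorAction (hq0m 0) measurable_id measurable_const measurable_const
  have initial : W1 ((agentAction (q0 0) ((diracProba x00).prod
      (ProbabilityMeasure.pi fun _ : Fin N => μ0))).map (measurable_empState N).aemeasurable)
      (majorAction (q0 0) x00 μ0 μ0) ≤ (Kq + 2) * e := by
    rw [← bindProba_diracProba haction x00]
    refine (W1_map_agentAction_le (hq0 0) _ _ μ0).trans ?_
    gcongr
    refine hlln _ _ ?_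
    simp [← Nat.cast_smul_eq_nsmul ℝ≥0∞, smul_smul, ENNReal.inv_mul_cancel, hN]
  exact W1_map_chainLaw_le (measurable_empState N) hstep
    (fun t => measurable_agentStep hp hp0 (hq t) (hq0m (t + 1)) N)
    (fun t => W1_map_agentStep_le hN hlln hp (hq t) (hq0 (t + 1))) initial t

variable [PseudoMetricSpace U] [CompactSpace U] [BorelSpace U]

lemma lipschitzWith_minorStep (hp : LipschitzWith Kp ↿p)
    {q : X → X0 → ProbabilityMeasure X → ProbabilityMeasure U} (hq : LipschitzWith Kq ↿q) :
    LipschitzWith (Kp * (1 + Kq)) (minorStep p q : (X0 × U0 × ProbabilityMeasure X) × X → _) := by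
  have select : LipschitzWith 1 fun z : (X0 × U0 × ProbabilityMeasure X) × X =>
      (z.2, z.1.1, z.1.2.2) :=
    .of_edist_le fun z z' => by simp only [Prod.edist_eq]; order
  have reorder : LipschitzWith 1 fun w : ((X0 × U0 × ProbabilityMeasure X) × X) × U =>
      (w.1.2, w.2, w.1.1.1, w.1.1.2.1, w.1.1.2.2) :=
    .of_edist_le fun w w' => by simp only [Prod.edist_eq]; order
  have := lipschitzWith_bindProba_prodMk (hq.comp select) (hp.comp reorder)
  rwa [mul_one, mul_one] at this

lemma lipschitzWith_meanFieldStep (hp : LipschitzWith Kp ↿p)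
    {q : X → X0 → ProbabilityMeasure X → ProbabilityMeasure U} (hq : LipschitzWith Kq ↿q) :
    LipschitzWith (Kp * (1 + Kq) * 2)
      (meanFieldStep p q : X0 × U0 × ProbabilityMeasure X → _) := by
  have hμ : LipschitzWith 1 fun s : X0 × U0 × ProbabilityMeasure X => s.2.2 :=
    .of_edist_le fun s s' => by simp only [Prod.edist_eq]; order
  have := lipschitzWith_bindProba_prodMk hμ (lipschitzWith_minorStep hp hq)
  rwa [one_add_one_eq_two] at this

lemma eventually_W1_map_agentLaw_le [Nonempty X] (hp : LipschitzWith Kp ↿p)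
    (hp0 : LipschitzWith Kp0 ↿p0)
    (Kq : ℝ≥0) (μ0 : ProbabilityMeasure X) (x00 : X0) (t : ℕ) {ε : ℝ} (hε : 0 < ε) :
    ∀ᶠ N in atTop, ∀ (q : ℕ → X → X0 → ProbabilityMeasure X → ProbabilityMeasure U)
      (q0 : ℕ → X0 → ProbabilityMeasure X → ProbabilityMeasure U0),
      (∀ t, LipschitzWith Kq ↿(q t)) → (∀ t, LipschitzWith Kq ↿(q0 t)) →
        W1 ((agentLaw p p0 q q0 μ0 x00 N t).map (measurable_empState N).aemeasurable)
          (limitLaw p p0 q q0 μ0 x00 t) ≤ ε := by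
  have hpm := measurable_of_lipschitzWith hp
  have hp0m := measurable_of_lipschitzWith hp0
  set K := (Kq + 2) * max 1 (Kp * (1 + Kq) * 2) * (1 + Kp0)
  obtain ⟨e, he, hle⟩ := exists_pos_mul_lt hε <|
    (∑ i ∈ Finset.range (t + 1), (K : ℝ) ^ i) * (Kq + 2)
  filter_upwards [eventually_integral_W1_emp_le (X := X) he, eventually_ne_atTop 0]
    with N hlln hN q q0 hq hq0
  have hstep (t : ℕ) : LipschitzWith K (limitStep p0 (q0 (t + 1)) (meanFieldStep p (q t))) :=
    lipschitzWith_limitStep hp0 (hq0 (t + 1)) (lipschitzWith_meanFieldStep hp (hq t))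
  refine (W1_map_agentLaw_le hN hlln hpm hp0m (fun t => measurable_of_lipschitzWith (hq t)) hq0
    hstep μ0 x00 t).trans ?_
  rw [← mul_assoc]
  exact hle.le

end PropagationOfChaos

section LipschitzUncurry

variable {A B C D E F : Type*} [PseudoMetricSpace A] [PseudoMetricSpace B] [PseudoMetricSpace C]
  [PseudoMetricSpace F] {L : ℝ}

lemma lipschitzWith_uncurry₂ {f : A → B → F}
    (h : ∀ a a' b b', dist (f a b) (f a' b') ≤ L * (dist a a' + dist b b')) :
    LipschitzWith (‖L‖₊ * 2) ↿f :=
  .of_dist_le_mul fun (a, b) (a', b') => (h a a' b b').trans <| by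
    rw [NNReal.coe_mul, mul_assoc]
    refine mul_le_mul (le_abs_self L) ?_ (by positivity) (norm_nonneg L)
    have ha : dist a a' ≤ dist (a, b) (a', b') := by simp only [Prod.dist_eq]; order
    have hb : dist b b' ≤ dist (a, b) (a', b') := by simp only [Prod.dist_eq]; order
    push_cast
    linarith

lemma lipschitzWith_uncurry₃ {f : A → B → C → F}
    (h : ∀ a a' b b' c c', dist (f a b c) (f a' b' c') ≤
      L * (dist a a' + dist b b' + dist c c')) :
    LipschitzWith (‖L‖₊ * 3) ↿f :=
  .of_dist_le_mul fun (a, b, c) (a', b', c') => (h a a' b b' c c').trans <| by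
    rw [NNReal.coe_mul, mul_assoc]
    refine mul_le_mul (le_abs_self L) ?_ (by positivity) (norm_nonneg L)
    have ha : dist a a' ≤ dist (a, b, c) (a', b', c') := by simp only [Prod.dist_eq]; order
    have hb : dist b b' ≤ dist (a, b, c) (a', b', c') := by simp only [Prod.dist_eq]; order
    have hc : dist c c' ≤ dist (a, b, c) (a', b', c') := by simp only [Prod.dist_eq]; order
    push_cast
    linarith

variable [PseudoMetricSpace D] [PseudoMetricSpace E]

lemma lipschitzWith_uncurry₅ {f : A → B → C → D → E → F}
    (h : ∀ a a' b b' c c' d d' e e', dist (f a b c d e) (f a' b' c' d' e') ≤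
      L * (dist a a' + dist b b' + dist c c' + dist d d' + dist e e')) :
    LipschitzWith (‖L‖₊ * 5) ↿f :=
  .of_dist_le_mul fun (a, b, c, d, e) (a', b', c', d', e') =>
    (h a a' b b' c c' d d' e e').trans <| by
      rw [NNReal.coe_mul, mul_assoc]
      refine mul_le_mul (le_abs_self L) ?_ (by positivity) (norm_nonneg L)
      set z := (a, b, c, d, e)
      set z' := (a', b', c', d', e')
      have ha : dist a a' ≤ dist z z' := by simp only [z, z', Prod.dist_eq]; order
      have hb : dist b b' ≤ dist z z' := by simp only [z, z', Prod.dist_eq]; order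
      have hc : dist c c' ≤ dist z z' := by simp only [z, z', Prod.dist_eq]; order
      have hd : dist d d' ≤ dist z z' := by simp only [z, z', Prod.dist_eq]; order
      have he : dist e e' ≤ dist z z' := by simp only [z, z', Prod.dist_eq]; order
      push_cast
      linarith

end LipschitzUncurry

section Objectives

lemma tendstoUniformlyOn_tsum_mul {ι α : Type*} {l : Filter ι} {s : Set α} {w : ℕ → ℝ}
    (hw : Summable w) {a : ι → α → ℕ → ℝ} {b : α → ℕ → ℝ} {M : ℝ} (ha : ∀ i j t, |a i j t| ≤ M)
    (hb : ∀ j t, |b j t| ≤ M)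
    (hab : ∀ t, TendstoUniformlyOn (fun i j => a i j t) (fun j => b j t) l s) :
    TendstoUniformlyOn (fun i j => ∑' t, w t * a i j t) (fun j => ∑' t, w t * b j t) l s := by
  simp only [tendstoUniformlyOn_iff_tendsto, tendsto_uniformity_iff_dist_tendsto_zero] at hab ⊢
  have summable_mul {c : ℕ → ℝ} (hc : ∀ t, |c t| ≤ M) : Summable fun t => w t * c t :=
    (hw.norm.mul_right M).of_norm_bounded fun t => by
      simpa only [norm_mul, Real.norm_eq_abs] using
        mul_le_mul_of_nonneg_left (hc t) (abs_nonneg (w t))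
  have termwise (t : ℕ) : Tendsto (fun q : ι × α => w t * (b q.2 t - a q.1 q.2 t)) (l ×ˢ 𝓟 s)
      (𝓝 0) := by
    simpa using (tendsto_zero_iff_abs_tendsto_zero _).2 (hab t) |>.const_mul (w t)
  have tendsto_tsum : Tendsto (fun q : ι × α => ∑' t, w t * (b q.2 t - a q.1 q.2 t)) (l ×ˢ 𝓟 s)
      (𝓝 0) := by
    simpa using tendsto_tsum_of_dominated_convergence (hw.norm.mul_right (M + M)) termwise <|
      .of_forall fun q t => by
        rw [norm_mul]
        exact mul_le_mul_of_nonneg_left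
          ((abs_sub _ _).trans (add_le_add (hb q.2 t) (ha q.1 q.2 t))) (norm_nonneg (w t))
  simpa only [Real.dist_eq, mul_sub, (summable_mul (hb _)).tsum_sub (summable_mul (ha _ _)),
    abs_zero] using tendsto_tsum.abs

variable {X U X0 U0 : Type*}
  [MetricSpace X] [CompactSpace X] [MeasurableSpace X] [BorelSpace X] [Nonempty X]
  [PseudoMetricSpace U] [CompactSpace U] [MeasurableSpace U] [BorelSpace U]
  [PseudoMetricSpace X0] [CompactSpace X0] [MeasurableSpace X0] [BorelSpace X0]
  [PseudoMetricSpace U0] [CompactSpace U0] [MeasurableSpace U0] [BorelSpace U0]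
  {Kp Kp0 Kr : ℝ≥0}
  {p : X → U → X0 → U0 → ProbabilityMeasure X → ProbabilityMeasure X}
  {p0 : X0 → U0 → ProbabilityMeasure X → ProbabilityMeasure X0}
  {r : X0 × U0 × ProbabilityMeasure X → ℝ}

lemma tendstoUniformlyOn_integral_agentLaw (hp : LipschitzWith Kp ↿p) (hp0 : LipschitzWith Kp0 ↿p0)
    (hr : LipschitzWith Kr r) (Kq : ℝ≥0) (μ0 : ProbabilityMeasure X) (x00 : X0) (t : ℕ) :
    TendstoUniformlyOn
      (fun N (π : (ℕ → X → X0 → ProbabilityMeasure X → ProbabilityMeasure U) ×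
          (ℕ → X0 → ProbabilityMeasure X → ProbabilityMeasure U0)) =>
        ∫ s, r (empState N s) ∂(agentLaw p p0 π.1 π.2 μ0 x00 N t : Measure _))
      (fun π => ∫ s, r s ∂(limitLaw p p0 π.1 π.2 μ0 x00 t : Measure _)) atTop
      {π | (∀ t, LipschitzWith Kq ↿(π.1 t)) ∧ ∀ t, LipschitzWith Kq ↿(π.2 t)} := by
  refine Metric.tendstoUniformlyOn_iff.2 fun ε hε => ?_
  obtain ⟨δ, hδ, hδε⟩ := exists_pos_mul_lt hε (Kr : ℝ)
  filter_upwards [eventually_W1_map_agentLaw_le hp hp0 Kq μ0 x00 t hδ] with N hN π hπ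
  rw [dist_comm, ← integral_map (measurable_empState N).aemeasurable
    hr.continuous.aestronglyMeasurable]
  calc _ ≤ Kr * W1 ((agentLaw p p0 π.1 π.2 μ0 x00 N t).map (measurable_empState N).aemeasurable)
        (limitLaw p p0 π.1 π.2 μ0 x00 t) := abs_integral_sub_integral_le_mul_W1 hr _ _
    _ ≤ Kr * δ := by gcongr; exact hN π.1 π.2 hπ.1 hπ.2
    _ < ε := hδε

lemma tendstoUniformlyOn_tsum_mul_integral_agentLaw (hp : LipschitzWith Kp ↿p)
    (hp0 : LipschitzWith Kp0 ↿p0) (hr : LipschitzWith Kr r) {w : ℕ → ℝ} (hw : Summable w)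
    (Kq : ℝ≥0) (μ0 : ProbabilityMeasure X) (x00 : X0) :
    TendstoUniformlyOn
      (fun N (π : (ℕ → X → X0 → ProbabilityMeasure X → ProbabilityMeasure U) ×
          (ℕ → X0 → ProbabilityMeasure X → ProbabilityMeasure U0)) =>
        ∑' t, w t * ∫ s, r (empState N s) ∂(agentLaw p p0 π.1 π.2 μ0 x00 N t : Measure _))
      (fun π => ∑' t, w t * ∫ s, r s ∂(limitLaw p p0 π.1 π.2 μ0 x00 t : Measure _)) atTop
      {π | (∀ t, LipschitzWith Kq ↿(π.1 t)) ∧ ∀ t, LipschitzWith Kq ↿(π.2 t)} := by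
  obtain ⟨M, hM⟩ := isCompact_univ.exists_bound_of_continuousOn hr.continuous.continuousOn
  have abs_integral_le {S : Type _} [MeasurableSpace S] (m : ProbabilityMeasure S)
      (φ : S → X0 × U0 × ProbabilityMeasure X) : |∫ s, r (φ s) ∂(m : Measure S)| ≤ M := by
    simpa using norm_integral_le_of_norm_le_const (μ := (m : Measure S))
      (.of_forall fun s => hM (φ s) (Set.mem_univ _))
  exact tendstoUniformlyOn_tsum_mul hw (fun N π t => abs_integral_le _ _)
    (fun π t => abs_integral_le _ id)
    (tendstoUniformlyOn_integral_agentLaw hp hp0 hr Kq μ0 x00)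

end Objectives

theorem statement16_general {X U X0 U0 : Type*}
    [MetricSpace X] [CompactSpace X] [MeasurableSpace X] [BorelSpace X] [Nonempty X]
    [PseudoMetricSpace U] [CompactSpace U] [MeasurableSpace U] [BorelSpace U]
    [PseudoMetricSpace X0] [CompactSpace X0] [MeasurableSpace X0] [BorelSpace X0]
    [PseudoMetricSpace U0] [CompactSpace U0] [MeasurableSpace U0] [BorelSpace U0]
    {w : ℕ → ℝ} (hw : Summable w) {Lp Lp0 Lr LPi : ℝ}
    {p : X → U → X0 → U0 → ProbabilityMeasure X → ProbabilityMeasure X}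
    (hp : ∀ (x x' : X) (u u' : U) (x0 x0' : X0) (u0 u0' : U0)
        (μ μ' : ProbabilityMeasure X) (f : X → ℝ), LipschitzWith 1 f →
      |∫ y, f y ∂(p x u x0 u0 μ : Measure X) - ∫ y, f y ∂(p x' u' x0' u0' μ' : Measure X)|
        ≤ Lp * (dist x x' + dist u u' + dist x0 x0' + dist u0 u0' + W1 μ μ'))
    {p0 : X0 → U0 → ProbabilityMeasure X → ProbabilityMeasure X0}
    (hp0 : ∀ (x0 x0' : X0) (u0 u0' : U0) (μ μ' : ProbabilityMeasure X) (f : X0 → ℝ),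
        LipschitzWith 1 f →
      |∫ y, f y ∂(p0 x0 u0 μ : Measure X0) - ∫ y, f y ∂(p0 x0' u0' μ' : Measure X0)|
        ≤ Lp0 * (dist x0 x0' + dist u0 u0' + W1 μ μ'))
    {r : X0 → U0 → ProbabilityMeasure X → ℝ}
    (hr : ∀ (x0 x0' : X0) (u0 u0' : U0) (μ μ' : ProbabilityMeasure X),
      |r x0 u0 μ - r x0' u0' μ'| ≤ Lr * (dist x0 x0' + dist u0 u0' + W1 μ μ'))
    {Pi : Set (ℕ → X → X0 → ProbabilityMeasure X → ProbabilityMeasure U)}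
    (hPi : ∀ π ∈ Pi, ∀ (t : ℕ) (x x' : X) (x0 x0' : X0) (μ μ' : ProbabilityMeasure X)
        (g : U → ℝ), LipschitzWith 1 g →
      |∫ u, g u ∂(π t x x0 μ : Measure U) - ∫ u, g u ∂(π t x' x0' μ' : Measure U)|
        ≤ LPi * (dist x x' + dist x0 x0' + W1 μ μ'))
    {Pi0 : Set (ℕ → X0 → ProbabilityMeasure X → ProbabilityMeasure U0)}
    (hPi0 : ∀ π0 ∈ Pi0, ∀ (t : ℕ) (x0 x0' : X0) (μ μ' : ProbabilityMeasure X) (g : U0 → ℝ),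
        LipschitzWith 1 g →
      |∫ u, g u ∂(π0 t x0 μ : Measure U0) - ∫ u, g u ∂(π0 t x0' μ' : Measure U0)|
        ≤ LPi * (dist x0 x0' + W1 μ μ'))
    (μ0 : ProbabilityMeasure X) (x00 : X0)
    {Tcl : (ℕ → X → X0 → ProbabilityMeasure X → ProbabilityMeasure U) →
      ℕ → X0 → U0 → ProbabilityMeasure X → ProbabilityMeasure X}
    (hTcl : ∀ q ∈ Pi, ∀ (t : ℕ) (x0 : X0) (u0 : U0) (μ : ProbabilityMeasure X),
      (Tcl q t x0 u0 μ : Measure X) = (μ : Measure X).bind fun x =>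
        ((q t x x0 μ : Measure U)).bind fun u => (p x u x0 u0 μ : Measure X)) :
    TendstoUniformlyOn
      (fun N π => ∑' t, w t * ∫ s, r s.1 s.2.1 (emp N s.2.2) ∂(m3LawN p p0 π.1 π.2 μ0 x00 N t))
      (fun π => ∑' t, w t * ∫ s, r s.1 s.2.1 s.2.2 ∂(m3LimLaw p0 π.2 (Tcl π.1) μ0 x00 t)) atTop
      (Pi ×ˢ Pi0) := by
  have hp' : LipschitzWith (‖Lp‖₊ * 5) ↿p := lipschitzWith_uncurry₅
    fun x x' u u' x0 x0' u0 u0' μ μ' => W1_le (hp x x' u u' x0 x0' u0 u0' μ μ')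
  have hp0' : LipschitzWith (‖Lp0‖₊ * 3) ↿p0 := lipschitzWith_uncurry₃
    fun x0 x0' u0 u0' μ μ' => W1_le (hp0 x0 x0' u0 u0' μ μ')
  have hPi' (q) (hq : q ∈ Pi) (t : ℕ) : LipschitzWith (‖LPi‖₊ * 3) ↿(q t) := lipschitzWith_uncurry₃
    fun x x' x0 x0' μ μ' => W1_le (hPi q hq t x x' x0 x0' μ μ')
  have hPi0' (q0) (hq0 : q0 ∈ Pi0) (t : ℕ) : LipschitzWith (‖LPi‖₊ * 3) ↿(q0 t) :=
    (lipschitzWith_uncurry₂ fun x0 x0' μ μ' => W1_le (hPi0 q0 hq0 t x0 x0' μ μ')).weaken <| by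
      gcongr; norm_num
  have hpm := measurable_of_lipschitzWith hp'
  have hp0m := measurable_of_lipschitzWith hp0'
  have hPim (q) (hq : q ∈ Pi) (t : ℕ) := measurable_of_lipschitzWith (hPi' q hq t)
  have hPi0m (q0) (hq0 : q0 ∈ Pi0) (t : ℕ) := measurable_of_lipschitzWith (hPi0' q0 hq0 t)
  have hT (q) (hq : q ∈ Pi) : Tcl q = fun t x0 u0 μ => meanFieldStep p (q t) (x0, u0, μ) := by
    funext t x0 u0 μ
    exact ProbabilityMeasure.toMeasure_injective <| (hTcl q hq t x0 u0 μ).trans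
      (toMeasure_meanFieldStep hpm (hPim q hq t) x0 u0 μ).symm
  refine (((tendstoUniformlyOn_tsum_mul_integral_agentLaw hp' hp0' (lipschitzWith_uncurry₃ hr) hw
    (‖LPi‖₊ * 3) μ0 x00).mono fun π hπ => ⟨hPi' π.1 hπ.1, hPi0' π.2 hπ.2⟩).congr
      (.of_forall fun N π hπ => ?_)).congr_right fun π hπ => ?_
  · simp only [toMeasure_agentLaw hpm hp0m (hPim _ hπ.1) (hPi0m _ hπ.2)]
    rfl
  · simp only [toMeasure_limitLaw hpm hp0m (hPim _ hπ.1) (hPi0m _ hπ.2), hT _ hπ.1]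
    rfl

/-- uniform convergence of objectives for M3FC. Under Lipschitz `p`, `p⁰`, `r`,
`γ ∈ (0,1)` and equi-Lipschitz policy classes `Π`, `Π⁰`, the `N`-agent objective
`J^N(π,π⁰) = E[Σ_t γ^t r(x⁰_t,u⁰_t,μ^N_t)]` converges to the limiting M3FC objective
`J(Φ⁻¹(π),π⁰) = E[Σ_t γ^t r(x⁰_t,u⁰_t,μ_t)]`, uniformly over `(π,π⁰) ∈ Π × Π⁰`. -/
theorem statement16 {X U X0 U0 : Type*}
    [MetricSpace X] [CompactSpace X] [MeasurableSpace X] [BorelSpace X] [Nonempty X]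
    [MetricSpace U] [CompactSpace U] [MeasurableSpace U] [BorelSpace U]
    [MetricSpace X0] [CompactSpace X0] [MeasurableSpace X0] [BorelSpace X0]
    [MetricSpace U0] [CompactSpace U0] [MeasurableSpace U0] [BorelSpace U0]
    (γ : ℝ) (hγ0 : 0 < γ) (hγ1 : γ < 1) (Lp Lp0 Lr LPi : ℝ)
    (p : X → U → X0 → U0 → ProbabilityMeasure X → ProbabilityMeasure X)
    (hp : ∀ (x x' : X) (u u' : U) (x0 x0' : X0) (u0 u0' : U0)
        (μ μ' : ProbabilityMeasure X) (f : X → ℝ), LipschitzWith 1 f →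
      |∫ y, f y ∂(p x u x0 u0 μ : Measure X) - ∫ y, f y ∂(p x' u' x0' u0' μ' : Measure X)|
        ≤ Lp * (dist x x' + dist u u' + dist x0 x0' + dist u0 u0' + W1 μ μ'))
    (p0 : X0 → U0 → ProbabilityMeasure X → ProbabilityMeasure X0)
    (hp0 : ∀ (x0 x0' : X0) (u0 u0' : U0) (μ μ' : ProbabilityMeasure X) (f : X0 → ℝ),
        LipschitzWith 1 f →
      |∫ y, f y ∂(p0 x0 u0 μ : Measure X0) - ∫ y, f y ∂(p0 x0' u0' μ' : Measure X0)|
        ≤ Lp0 * (dist x0 x0' + dist u0 u0' + W1 μ μ'))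
    (r : X0 → U0 → ProbabilityMeasure X → ℝ)
    (hr : ∀ (x0 x0' : X0) (u0 u0' : U0) (μ μ' : ProbabilityMeasure X),
      |r x0 u0 μ - r x0' u0' μ'| ≤ Lr * (dist x0 x0' + dist u0 u0' + W1 μ μ'))
    (Pi : Set (ℕ → X → X0 → ProbabilityMeasure X → ProbabilityMeasure U))
    (hPi : ∀ π ∈ Pi, ∀ (t : ℕ) (x x' : X) (x0 x0' : X0) (μ μ' : ProbabilityMeasure X)
        (g : U → ℝ), LipschitzWith 1 g →
      |∫ u, g u ∂(π t x x0 μ : Measure U) - ∫ u, g u ∂(π t x' x0' μ' : Measure U)|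
        ≤ LPi * (dist x x' + dist x0 x0' + W1 μ μ'))
    (Pi0 : Set (ℕ → X0 → ProbabilityMeasure X → ProbabilityMeasure U0))
    (hPi0 : ∀ π0 ∈ Pi0, ∀ (t : ℕ) (x0 x0' : X0) (μ μ' : ProbabilityMeasure X) (g : U0 → ℝ),
        LipschitzWith 1 g →
      |∫ u, g u ∂(π0 t x0 μ : Measure U0) - ∫ u, g u ∂(π0 t x0' μ' : Measure U0)|
        ≤ LPi * (dist x0 x0' + W1 μ μ'))
    (μ0 : ProbabilityMeasure X) (x00 : X0)
    (Tcl : (ℕ → X → X0 → ProbabilityMeasure X → ProbabilityMeasure U) →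
      ℕ → X0 → U0 → ProbabilityMeasure X → ProbabilityMeasure X)
    (hTcl : ∀ q ∈ Pi, ∀ (t : ℕ) (x0 : X0) (u0 : U0) (μ : ProbabilityMeasure X),
      (Tcl q t x0 u0 μ : Measure X) = (μ : Measure X).bind fun x =>
        ((q t x x0 μ : Measure U)).bind fun u => (p x u x0 u0 μ : Measure X)) :
    ∀ ε > (0 : ℝ), ∃ N0 : ℕ, ∀ N ≥ N0, ∀ q ∈ Pi, ∀ q0 ∈ Pi0,
      |(∑' t : ℕ, γ ^ t * ∫ s, r s.1 s.2.1 (emp N s.2.2) ∂(m3LawN p p0 q q0 μ0 x00 N t))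
        - ∑' t : ℕ, γ ^ t * ∫ s, r s.1 s.2.1 s.2.2 ∂(m3LimLaw p0 q0 (Tcl q) μ0 x00 t)|
        ≤ ε := by
  intro ε hε
  obtain ⟨N0, hN0⟩ := eventually_atTop.1 <| Metric.tendstoUniformlyOn_iff.1 (statement16_general
    (summable_geometric_of_lt_one hγ0.le hγ1) hp hp0 hr hPi hPi0 μ0 x00 hTcl) ε hε
  exact ⟨N0, fun N hN q hq q0 hq0 => (abs_sub_comm _ _).trans_le (hN0 N hN (q, q0) ⟨hq, hq0⟩).le⟩
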